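/- arXiv:2005.07067 — 4 statements merged into one kernel-verified Lean document; each statement's English description precedes it below -/
import Mathlib

section
/- Let K be a bounded linear operator on L_p(X,π) such that K^i is compact for some i ∈ ℕ, and such that Kf > 0 π-almost everywhere whenever f ∈ L_p(X,π) satisfies f > 0 π-almost everywhere. Then for every h ∈ L_p(X,π) with h > 0 π-almost everywhere, ρ(K) = lim_{n→∞} ( ∫ |K^n h|^p dπ )^{1/(p n)}. -/
open MeasureTheory Filter Topology ENNReal

/-- The spectral radius of a bounded linear operator, via the Gelfand formula
`ρ(K) = lim_n ‖K^n‖^(1/n) = inf_{n ≥ 1} ‖K^n‖^(1/n)`. -/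
noncomputable def specRad {E : Type*} [NormedAddCommGroup E] [NormedSpace ℝ E]
    (K : E →L[ℝ] E) : ℝ := ⨅ n : ℕ, ‖K ^ (n + 1)‖ ^ (1 / (n + 1) : ℝ)

section helpers

variable {X : Type*} [MeasurableSpace X] {π : Measure X} {p : ℝ≥0∞} [Fact (1 ≤ p)]

lemma aux_toReal_pos (hp_top : p ≠ ⊤) : 0 < p.toReal :=
  ENNReal.toReal_pos (zero_lt_one.trans_le (Fact.out : 1 ≤ p)).ne' hp_top

lemma aux_norm_eq (hp_top : p ≠ ⊤) (f : Lp ℝ p π) :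
    ‖f‖ = (∫ x, |f x| ^ p.toReal ∂π) ^ (1 / p.toReal) := by
  have hp0 : p ≠ 0 := (zero_lt_one.trans_le (Fact.out : 1 ≤ p)).ne'
  rw [Lp.norm_def, (Lp.memLp f).eLpNorm_eq_integral_rpow_norm hp0 hp_top,
    ENNReal.toReal_ofReal (by positivity)]
  simp [Real.norm_eq_abs]

lemma aux_tail (hp_top : p ≠ ⊤) (h : Lp ℝ p π) (hh : ∀ᵐ x ∂π, 0 < h x) (f : Lp ℝ p π) :
    Tendsto (fun m : ℕ => ‖(f - (m : ℝ) • h) ⊔ 0‖) atTop (𝓝 0) := by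
  have hp := aux_toReal_pos hp_top
  have hp0 : p ≠ 0 := (zero_lt_one.trans_le (Fact.out : 1 ≤ p)).ne'
  have key : ∀ m : ℕ, ∀ᵐ x ∂π,
      ((f - (m : ℝ) • h) ⊔ 0 : Lp ℝ p π) x = max (f x - m * h x) 0 := by
    intro m
    filter_upwards [Lp.coeFn_sup (f - (m : ℝ) • h) 0, Lp.coeFn_sub f ((m : ℝ) • h),
      Lp.coeFn_smul (m : ℝ) h, Lp.coeFn_zero ℝ p π] with x h1 h2 h3 h4
    rw [h1, Pi.sup_apply, h2, h4, Pi.sub_apply, h3]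
    simp
  simp_rw [aux_norm_eq hp_top]
  have : Tendsto (fun m : ℕ => ∫ x, |((f - (m : ℝ) • h) ⊔ 0 : Lp ℝ p π) x| ^ p.toReal ∂π)
      atTop (𝓝 (∫ _, (0 : ℝ) ∂π)) := by
    refine tendsto_integral_of_dominated_convergence (fun x => |f x| ^ p.toReal) ?_ ?_ ?_ ?_
    · intro m
      exact ((Lp.memLp ((f - (m : ℝ) • h) ⊔ 0)).integrable_norm_rpow hp0 hp_top).1
    · exact (Lp.memLp f).integrable_norm_rpow hp0 hp_top
    · intro m
      filter_upwards [key m, hh] with x hx hx2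
      rw [hx, Real.norm_of_nonneg (by positivity)]
      refine Real.rpow_le_rpow (abs_nonneg _) ?_ hp.le
      rw [abs_of_nonneg (le_max_right _ _)]
      have : 0 ≤ m * h x := by positivity
      exact max_le (by linarith [le_abs_self (f x)]) (abs_nonneg _)
    · filter_upwards [ae_all_iff.2 key, hh] with x hx hx2
      apply tendsto_const_nhds.congr'
      obtain ⟨N, hN⟩ := exists_nat_ge (f x / h x)
      filter_upwards [eventually_ge_atTop N] with m hm
      have h1 : f x ≤ m * h x := by
        rw [← div_le_iff₀ hx2]
        exact hN.trans (by exact_mod_cast hm)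
      rw [hx, max_eq_right (by linarith), abs_zero, Real.zero_rpow hp.ne']
  have h2 := this.rpow_const (p := 1 / p.toReal) (Or.inr (by positivity))
  simpa [Real.zero_rpow (inv_pos.2 hp).ne'] using h2

lemma aux_unif (hp_top : p ≠ ⊤) (h : Lp ℝ p π) (hh : ∀ᵐ x ∂π, 0 < h x)
    (C : Set (Lp ℝ p π)) (hC : IsCompact C) (ε : ℝ) (hε : 0 < ε) :
    ∃ m : ℕ, ∀ f ∈ C, ‖(f - (m : ℝ) • h) ⊔ 0‖ ≤ ε := by
  obtain ⟨t, htf, ht⟩ := Metric.totallyBounded_iff.1 hC.totallyBounded (ε / 2) (by positivity)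
  have h1 : ∀ᶠ m : ℕ in atTop, ∀ g ∈ t, ‖(g - (m : ℝ) • h) ⊔ 0‖ < ε / 2 :=
    (Filter.eventually_all_finite htf).2 fun g _ =>
      (aux_tail hp_top h hh g).eventually_lt_const (by positivity)
  obtain ⟨m, hm⟩ := h1.exists
  refine ⟨m, fun f hf => ?_⟩
  obtain ⟨g, hg, hfg⟩ := Set.mem_iUnion₂.1 (ht hf)
  have h3 := norm_sup_sub_sup_le_norm (f - (m : ℝ) • h) (g - (m : ℝ) • h) 0
  rw [sub_sub_sub_cancel_right] at h3
  rw [Metric.mem_ball, dist_eq_norm] at hfg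
  have h4 := norm_sub_norm_le ((f - (m : ℝ) • h) ⊔ 0) ((g - (m : ℝ) • h) ⊔ 0)
  linarith [hm g hg]

lemma aux_pos (K : Lp ℝ p π →L[ℝ] Lp ℝ p π)
    (hK_pos : ∀ f : Lp ℝ p π, (∀ᵐ x ∂π, 0 < f x) → ∀ᵐ x ∂π, 0 < (K f : X → ℝ) x)
    (h : Lp ℝ p π) (hh : ∀ᵐ x ∂π, 0 < h x) (f : Lp ℝ p π) (hf : 0 ≤ f) : 0 ≤ K f := by
  have h1 : ∀ ε : ℝ, 0 < ε → 0 ≤ K (f + ε • h) := by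
    intro ε hε
    rw [← Lp.coeFn_nonneg]
    have : ∀ᵐ x ∂π, 0 < (K (f + ε • h) : X → ℝ) x := by
      apply hK_pos
      filter_upwards [Lp.coeFn_add f (ε • h), Lp.coeFn_smul ε h, (Lp.coeFn_nonneg f).2 hf, hh]
        with x h1 h2 h3 h4
      rw [h1, Pi.add_apply, h2, Pi.smul_apply, smul_eq_mul]
      have h3' : 0 ≤ f x := h3
      positivity
    filter_upwards [this] with x hx using hx.le
  have h2 : Tendsto (fun ε : ℝ => K (f + ε • h)) (𝓝[>] 0) (𝓝 (K f)) := by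
    have hc : Continuous (fun ε : ℝ => K (f + ε • h)) := by fun_prop
    have := hc.tendsto 0
    simp only [zero_smul, add_zero] at this
    exact this.mono_left nhdsWithin_le_nhds
  exact ge_of_tendsto h2 (by filter_upwards [self_mem_nhdsWithin] with ε hε using h1 ε hε)

lemma aux_pow_pos (K : Lp ℝ p π →L[ℝ] Lp ℝ p π)
    (hK : ∀ f : Lp ℝ p π, 0 ≤ f → 0 ≤ K f) (n : ℕ) (f : Lp ℝ p π) (hf : 0 ≤ f) :
    0 ≤ (K ^ n) f := by
  induction n with
  | zero => simpa using hf
  | succ n ih => rw [pow_succ']; exact hK _ ih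

lemma aux_key (hp_top : p ≠ ⊤) (K : Lp ℝ p π →L[ℝ] Lp ℝ p π)
    (hK : ∀ f : Lp ℝ p π, 0 ≤ f → 0 ≤ K f)
    (h : Lp ℝ p π) (hh : ∀ᵐ x ∂π, 0 < h x) (i : ℕ) (hi : IsCompactOperator ⇑(K ^ i))
    (ε : ℝ) (hε : 0 < ε) :
    ∃ m : ℕ, ∀ n : ℕ, ‖K ^ (n + i)‖ ≤ m * ‖(K ^ n) h‖ + ε * ‖K ^ n‖ := by
  obtain ⟨C, hC, hCs⟩ := IsCompactOperator.image_closedBall_subset_compact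
    (f := ((K ^ i : Lp ℝ p π →L[ℝ] Lp ℝ p π) : Lp ℝ p π →ₗ[ℝ] Lp ℝ p π)) hi 1
  obtain ⟨m, hm⟩ := aux_unif hp_top h hh C hC ε hε
  refine ⟨m, fun n => ?_⟩
  refine ContinuousLinearMap.opNorm_le_of_unit_norm (by positivity) fun f hf => ?_
  have habs : |(K ^ (n + i)) f| ≤ (K ^ (n + i)) |f| := by
    have e1 := aux_pow_pos K hK (n + i) (|f| - f) (sub_nonneg.2 (le_abs_self f))
    have e2 := aux_pow_pos K hK (n + i) (|f| + f)
      (by rw [← neg_le_iff_add_nonneg]; exact neg_le_abs f)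
    rw [map_sub, sub_nonneg] at e1
    rw [map_add] at e2
    exact abs_le'.2 ⟨e1, by rwa [neg_le_iff_add_nonneg]⟩
  set g := (K ^ i) |f| with hg
  have hgC : g ∈ C := hCs ⟨|f|, by rw [mem_closedBall_zero_iff, norm_abs_eq_norm, hf], rfl⟩
  set r := (g - (m : ℝ) • h) ⊔ 0 with hr
  have hgr : 0 ≤ (m : ℝ) • h + r - g := by
    have : g - (m : ℝ) • h ≤ r := le_sup_left
    rw [sub_nonneg]
    rwa [sub_le_iff_le_add'] at this
  have h1 := aux_pow_pos K hK n _ hgr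
  rw [map_sub, sub_nonneg, map_add, map_smul] at h1
  have h2 : (K ^ (n + i)) |f| = (K ^ n) g := by rw [pow_add]; rfl
  rw [h2] at habs
  have h3 : ‖(K ^ (n + i)) f‖ ≤ ‖(m : ℝ) • (K ^ n) h + (K ^ n) r‖ :=
    norm_le_norm_of_abs_le_abs ((habs.trans h1).trans (le_abs_self _))
  calc _ ≤ _ := h3
    _ ≤ ‖(m : ℝ) • (K ^ n) h‖ + ‖(K ^ n) r‖ := norm_add_le _ _
    _ ≤ m * ‖(K ^ n) h‖ + ‖K ^ n‖ * ε := by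
        gcongr
        · rw [norm_smul]; simp
        · exact ((K ^ n).le_opNorm r).trans (by gcongr; exact hm g hgC)
    _ = _ := by ring

end helpers

/-- Upper growth bound. -/
lemma aux_upper (a : ℕ → ℝ) (ha : ∀ n, 0 ≤ a n) (hsub : ∀ m n, a (m + n) ≤ a m * a n)
    (N : ℕ) (hN : 0 < N) (t : ℝ) (ht : 0 < t) (haN : a N ≤ t ^ N) :
    ∃ C : ℝ, 0 < C ∧ ∀ n, a n ≤ C * t ^ n := by
  refine ⟨1 + ∑ r ∈ Finset.range N, a r / t ^ r, ?_, ?_⟩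
  · have : 0 ≤ ∑ r ∈ Finset.range N, a r / t ^ r :=
      Finset.sum_nonneg fun r _ => div_nonneg (ha r) (by positivity)
    linarith
  · intro n
    induction n using Nat.strong_induction_on with
    | _ n ih =>
      by_cases hn : n < N
      · have h1 : a n / t ^ n ≤ ∑ r ∈ Finset.range N, a r / t ^ r :=
          Finset.single_le_sum (f := fun r => a r / t ^ r)
            (fun r _ => div_nonneg (ha r) (by positivity)) (Finset.mem_range.2 hn)
        rw [← div_le_iff₀ (by positivity)]
        linarith
      · push Not at hn
        obtain ⟨k, rfl⟩ := Nat.exists_eq_add_of_le hn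
        have h2 := ih k (by omega)
        calc a (N + k) ≤ a N * a k := hsub _ _
          _ ≤ t ^ N * _ := mul_le_mul haN h2 (ha _) (by positivity)
          _ = _ := by rw [pow_add]; ring

/-- Iterated key inequality. -/
lemma aux_iter (a b : ℕ → ℝ) (hb : ∀ n, 0 ≤ b n) (i : ℕ) (m ε M : ℝ) (hm : 0 ≤ m) (hε : 0 ≤ ε)
    (hM : 1 ≤ M) (hεM : ε ≤ M) (hbM : ∀ n, b (n + i) ≤ M * b n)
    (hkey : ∀ n, a (n + i) ≤ m * b n + ε * a n) (j : ℕ) :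
    ∀ n, a (n + j * i) ≤ j * m * M ^ j * b n + ε ^ j * a n := by
  induction j with
  | zero => intro n; simp
  | succ j ih =>
    intro n
    have h1 := ih (n + i)
    have h2 : ε ^ j ≤ M ^ (j + 1) :=
      (pow_le_pow_left₀ hε hεM j).trans (pow_le_pow_right₀ hM (by omega))
    have e : n + (j + 1) * i = n + i + j * i := by ring
    rw [e]
    calc _ ≤ _ := h1
      _ ≤ j * m * M ^ j * (M * b n) + ε ^ j * (m * b n + ε * a n) := by
          gcongr
          · exact hbM n
          · exact hkey n
      _ = j * m * M ^ (j + 1) * b n + ε ^ j * (m * b n) + ε ^ (j + 1) * a n := by ring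
      _ ≤ j * m * M ^ (j + 1) * b n + M ^ (j + 1) * (m * b n) + ε ^ (j + 1) * a n := by
          have := mul_nonneg hm (hb n)
          gcongr
      _ = _ := by push_cast; ring

/-- Lower growth bound. -/
lemma aux_lower (a b : ℕ → ℝ) (hb : ∀ n, 0 ≤ b n) (i : ℕ)
    (ρ : ℝ) (hρ : 0 < ρ) (hρa : ∀ n, 0 < n → ρ ^ n ≤ a n)
    (hup : ∀ t, ρ < t → ∃ C : ℝ, 0 < C ∧ ∀ n, a n ≤ C * t ^ n)
    (B : ℝ) (hbM : ∀ n, b (n + i) ≤ B * b n)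
    (hkey : ∀ ε : ℝ, 0 < ε → ∃ m : ℕ, ∀ n, a (n + i) ≤ m * b n + ε * a n)
    (s : ℝ) (hs : 0 < s) (hsρ : s < ρ) :
    ∀ᶠ n in atTop, s ^ n ≤ b n := by
  set ε : ℝ := ρ ^ i / 4 with hε
  have hε0 : 0 < ε := by positivity
  obtain ⟨m0, hm0⟩ := hkey ε hε0
  set m : ℝ := m0 + 1 with hm
  have hmpos : 0 < m := by positivity
  have hkm : ∀ n, a (n + i) ≤ m * b n + ε * a n := fun n => by
    have := hm0 n
    have := hb n
    rw [hm]; linarith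
  set M : ℝ := max (max 1 B) ε with hMdef
  have hM1 : 1 ≤ M := (le_max_left _ _).trans (le_max_left _ _)
  have hiter := aux_iter a b hb i m ε M hmpos.le hε0.le hM1 (le_max_right _ _)
    (fun n => (hbM n).trans (mul_le_mul_of_nonneg_right
      ((le_max_right _ _).trans (le_max_left _ _)) (hb n))) hkm
  set D : ℝ := 2 * M / ρ ^ i with hD
  have hD0 : 0 < D := by positivity
  -- choose s < s r^2 < ρ
  obtain ⟨s', hs1, hs2⟩ := exists_between hsρ
  have hs'0 : 0 < s' := hs.trans hs1
  obtain ⟨q0, hq0⟩ := pow_unbounded_of_one_lt D ((one_lt_div hs'0).2 hs2)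
  set q := q0 + 1 with hq
  have hqD : D * s' ^ q ≤ ρ ^ q := by
    have h1 : (ρ / s') ^ q0 ≤ (ρ / s') ^ q :=
      pow_le_pow_right₀ ((one_lt_div hs'0).2 hs2).le (by omega)
    have h2 := hq0.le.trans h1
    rwa [div_pow, le_div_iff₀ (by positivity)] at h2
  -- choose t
  obtain ⟨t, ht1, ht2⟩ : ∃ t, ρ < t ∧ t ^ q < 2 * ρ ^ q := by
    have hc : Tendsto (fun t : ℝ => t ^ q) (𝓝[>] ρ) (𝓝 (ρ ^ q)) :=
      ((continuous_pow q).tendsto ρ).mono_left nhdsWithin_le_nhds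
    have h1 : ∀ᶠ t in 𝓝[>] ρ, t ^ q < 2 * ρ ^ q :=
      hc.eventually_lt_const (by have : 0 < ρ ^ q := by positivity
                                 linarith)
    obtain ⟨t, h2, h3⟩ := (h1.and self_mem_nhdsWithin).exists
    exact ⟨t, h3, h2⟩
  have ht0 : 0 < t := hρ.trans ht1
  obtain ⟨C, hC0, hC⟩ := hup t ht1
  -- big-n conditions
  have hD' : D ≤ (ρ / s') ^ q := by
    rwa [div_pow, le_div_iff₀ (by positivity)]
  have ht' : (t / ρ) ^ q ≤ 2 := by
    rw [div_pow, div_le_iff₀ (by positivity)]; exact ht2.le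
  have hjt : Tendsto (fun n : ℕ => n / q + 1) atTop atTop :=
    (tendsto_add_atTop_nat 1).comp (Nat.tendsto_div_const_atTop (Nat.succ_ne_zero q0))
  have hev1 : ∀ᶠ n : ℕ in atTop, 2 * C ≤ 2 ^ (n / q + 1) :=
    ((tendsto_pow_atTop_atTop_of_one_lt (one_lt_two : (1 : ℝ) < 2)).comp hjt).eventually_ge_atTop _
  set E : ℝ := 2 * m * (ρ / s') ^ q with hE
  have hev2 : ∀ᶠ n : ℕ in atTop, E ≤ (s' / s) ^ n :=
    (tendsto_pow_atTop_atTop_of_one_lt ((one_lt_div hs).2 hs1)).eventually_ge_atTop _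
  filter_upwards [hev1, hev2, eventually_gt_atTop 0] with n h1 h2 hn
  set j := n / q + 1 with hj
  have hqpos : 0 < q := Nat.succ_pos q0
  have hj1 : n ≤ q * j := by
    have := Nat.div_add_mod n q
    have := Nat.mod_lt n hqpos
    rw [hj, mul_add]; omega
  have hj2 : q * j ≤ n + q := by
    have := Nat.mul_div_le n q
    rw [hj, mul_add]; omega
  have A1 : t ^ n ≤ 2 ^ j * ρ ^ n := by
    rw [← div_le_iff₀ (by positivity), ← div_pow]
    calc (t / ρ) ^ n ≤ (t / ρ) ^ (q * j) := pow_le_pow_right₀ ((one_le_div hρ).2 ht1.le) hj1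
      _ = ((t / ρ) ^ q) ^ j := pow_mul _ _ _
      _ ≤ 2 ^ j := pow_le_pow_left₀ (by positivity) ht' j
  have A2 : ε ^ j * a n ≤ ρ ^ (n + j * i) / 2 := by
    calc ε ^ j * a n ≤ ε ^ j * (C * (2 ^ j * ρ ^ n)) := by
          gcongr
          exact (hC n).trans (by gcongr)
      _ ≤ ε ^ j * (2 ^ j / 2 * (2 ^ j * ρ ^ n)) := by
          gcongr
          linarith
      _ = (ε * 4) ^ j * ρ ^ n / 2 := by
          have : (4 : ℝ) = 2 * 2 := by norm_num
          rw [this, mul_pow, mul_pow]; ring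
      _ = _ := by
          rw [hε, div_mul_cancel₀ _ (by norm_num), ← pow_mul, pow_add, mul_comm i j]; ring
  have A3 := hρa (n + j * i) (by omega)
  have A4 := hiter j n
  have A5 : (j : ℝ) ≤ 2 ^ j := by exact_mod_cast (Nat.lt_two_pow_self (n := j)).le
  have A6 : ρ ^ (n + j * i) ≤ 2 * m * (2 * M) ^ j * b n := by
    have : j * m * M ^ j * b n ≤ 2 ^ j * m * M ^ j * b n := by
      have := hb n
      gcongr
    rw [mul_pow]
    linarith
  have A7 : D ^ j ≤ (ρ / s') ^ (n + q) := by
    calc D ^ j ≤ ((ρ / s') ^ q) ^ j := pow_le_pow_left₀ hD0.le hD' j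
      _ = (ρ / s') ^ (q * j) := (pow_mul _ _ _).symm
      _ ≤ _ := pow_le_pow_right₀ ((one_lt_div hs'0).2 hs2).le hj2
  have A8 : ρ ^ n ≤ 2 * m * D ^ j * b n := by
    have e : 2 * m * D ^ j * b n = 2 * m * (2 * M) ^ j * b n / ρ ^ (j * i) := by
      rw [hD, div_pow, ← pow_mul, mul_comm i j]; ring
    rw [e, le_div_iff₀ (by positivity), ← pow_add]
    exact A6
  have A9 : ρ ^ n ≤ E * (ρ / s') ^ n * b n := by
    calc ρ ^ n ≤ _ := A8
      _ ≤ 2 * m * (ρ / s') ^ (n + q) * b n := by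
          have := hb n
          gcongr
      _ = _ := by rw [hE, pow_add]; ring
  have A10 : s' ^ n ≤ E * b n := by
    have e : E * (ρ / s') ^ n * b n = ρ ^ n * (E * b n / s' ^ n) := by
      rw [div_pow]; ring
    rw [e] at A9
    have h3 : 1 ≤ E * b n / s' ^ n := by
      have : 0 < ρ ^ n := by positivity
      exact le_of_mul_le_mul_left (by linarith) this
    rwa [one_le_div (by positivity)] at h3
  have A11 : s' ^ n ≤ (s' / s) ^ n * b n := A10.trans (mul_le_mul_of_nonneg_right h2 (hb n))
  have e : (s' / s) ^ n * b n = s' ^ n * (b n / s ^ n) := by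
    rw [div_pow]; ring
  rw [e] at A11
  have h3 : 1 ≤ b n / s ^ n := by
    have : 0 < s' ^ n := by positivity
    exact le_of_mul_le_mul_left (by linarith) this
  rwa [one_le_div (by positivity)] at h3

/-- From growth bounds to the limit of `n`-th roots. -/
lemma aux_tendsto (b : ℕ → ℝ) (hb : ∀ n, 0 ≤ b n) (ρ : ℝ) (hρ : 0 ≤ ρ)
    (hup : ∀ t, ρ < t → ∃ C : ℝ, 0 < C ∧ ∀ n, b n ≤ C * t ^ n)
    (hlow : ∀ s, 0 < s → s < ρ → ∀ᶠ n in atTop, s ^ n ≤ b n) :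
    Tendsto (fun n : ℕ => b n ^ (1 / (n : ℝ))) atTop (𝓝 ρ) := by
  rw [tendsto_order]
  constructor
  · intro s hs
    by_cases hs0 : s < 0
    · exact Eventually.of_forall fun n => hs0.trans_le (Real.rpow_nonneg (hb n) _)
    · push Not at hs0
      obtain ⟨s', h1, h2⟩ := exists_between hs
      filter_upwards [hlow s' (hs0.trans_lt h1) h2, eventually_gt_atTop 0] with n hn hn0
      refine h1.trans_le ?_
      have h3 := Real.rpow_le_rpow (pow_nonneg (hs0.trans h1.le) n) hn
        (by positivity : (0 : ℝ) ≤ 1 / (n : ℝ))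
      rwa [one_div, Real.pow_rpow_inv_natCast (hs0.trans h1.le) hn0.ne', ← one_div] at h3
  · intro t ht
    obtain ⟨t1, h1, h2⟩ := exists_between ht
    obtain ⟨t2, h3, h4⟩ := exists_between h2
    have ht1 : 0 < t1 := hρ.trans_lt h1
    obtain ⟨C, hC0, hC⟩ := hup t1 h1
    have hev : ∀ᶠ n : ℕ in atTop, C ≤ (t2 / t1) ^ n :=
      (tendsto_pow_atTop_atTop_of_one_lt ((one_lt_div ht1).2 h3)).eventually_ge_atTop _
    filter_upwards [hev, eventually_gt_atTop 0] with n hn hn0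
    refine lt_of_le_of_lt ?_ h4
    have h5 : b n ≤ t2 ^ n := by
      calc b n ≤ C * t1 ^ n := hC n
        _ ≤ (t2 / t1) ^ n * t1 ^ n := by gcongr
        _ = t2 ^ n := by rw [← mul_pow, div_mul_cancel₀ _ ht1.ne']
    have h6 := Real.rpow_le_rpow (hb n) h5 (by positivity : (0 : ℝ) ≤ 1 / (n : ℝ))
    rw [one_div, Real.pow_rpow_inv_natCast (ht1.trans h3).le hn0.ne'] at h6
    rwa [one_div]

/-- **Local spectral radius formula for eventually compact, strictly positive
operators.**  Let `(X, F, π)` be a probability space, `p ∈ [1, ∞)`, and `K` a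
bounded linear operator on `L_p(X,π)` such that `K^i` is compact for some
`i ∈ ℕ` and `K f > 0` π-a.e. whenever `f > 0` π-a.e.  Then for every
`h ∈ L_p(X,π)` with `h > 0` π-a.e.,
`ρ(K) = lim_n ( ∫ |K^n h|^p dπ )^(1/(p n))`. -/
theorem specRad_eq_lim_integral_iterates
    {X : Type*} [MeasurableSpace X] (π : Measure X) [IsProbabilityMeasure π]
    (p : ℝ≥0∞) [Fact (1 ≤ p)] (hp_top : p ≠ ⊤)
    (K : Lp ℝ p π →L[ℝ] Lp ℝ p π)
    (hK_evcompact : ∃ i : ℕ, 0 < i ∧ IsCompactOperator ⇑(K ^ i))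
    (hK_pos : ∀ f : Lp ℝ p π, (∀ᵐ x ∂π, 0 < f x) → ∀ᵐ x ∂π, 0 < (K f : X → ℝ) x)
    (h : Lp ℝ p π) (hh : ∀ᵐ x ∂π, 0 < h x) :
    Tendsto
      (fun n : ℕ =>
        (∫ x, |((K ^ n) h : X → ℝ) x| ^ p.toReal ∂π) ^ (1 / (p.toReal * n)))
      atTop (𝓝 (specRad K)) := by
  have hbdd : BddBelow (Set.range fun n : ℕ => ‖K ^ (n + 1)‖ ^ (1 / (n + 1) : ℝ)) :=
    ⟨0, by rintro _ ⟨n, rfl⟩; positivity⟩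
  have hρ0 : 0 ≤ specRad K := Real.iInf_nonneg fun n => by positivity
  have hρa : ∀ n : ℕ, 0 < n → specRad K ^ n ≤ ‖K ^ n‖ := by
    intro n hn
    obtain ⟨k, rfl⟩ := Nat.exists_eq_succ_of_ne_zero hn.ne'
    have h1 : specRad K ≤ ‖K ^ (k + 1)‖ ^ (1 / (k + 1) : ℝ) := ciInf_le hbdd k
    have h2 := pow_le_pow_left₀ hρ0 h1 (k + 1)
    have h3 : (1 / (k + 1) : ℝ) = ((k + 1 : ℕ) : ℝ)⁻¹ := by push_cast; rw [one_div]
    rwa [h3, Real.rpow_inv_natCast_pow (norm_nonneg _) (Nat.succ_ne_zero k)] at h2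
  have hup : ∀ t, specRad K < t → ∃ C : ℝ, 0 < C ∧ ∀ n, ‖K ^ n‖ ≤ C * t ^ n := by
    intro t ht
    obtain ⟨k, hk⟩ := exists_lt_of_ciInf_lt ht
    have ht0 : 0 < t := hρ0.trans_lt ht
    refine aux_upper (fun n => ‖K ^ n‖) (fun n => norm_nonneg _)
      (fun m n => by simp only [pow_add]; exact norm_mul_le _ _) (k + 1) (Nat.succ_pos k) t ht0 ?_
    have h2 := pow_le_pow_left₀ (by positivity) hk.le (k + 1)
    have h3 : (1 / (k + 1) : ℝ) = ((k + 1 : ℕ) : ℝ)⁻¹ := by push_cast; rw [one_div]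
    rwa [h3, Real.rpow_inv_natCast_pow (norm_nonneg _) (Nat.succ_ne_zero k)] at h2
  have hKp := aux_pos K hK_pos h hh
  obtain ⟨i, -, hi⟩ := hK_evcompact
  have main : Tendsto (fun n : ℕ => ‖(K ^ n) h‖ ^ (1 / (n : ℝ))) atTop (𝓝 (specRad K)) := by
    refine aux_tendsto (fun n => ‖(K ^ n) h‖) (fun n => norm_nonneg _) _ hρ0 ?_ ?_
    · intro t ht
      have ht0 : 0 < t := hρ0.trans_lt ht
      obtain ⟨C, hC0, hC⟩ := hup t ht
      refine ⟨C * (‖h‖ + 1), by positivity, fun n => ?_⟩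
      calc ‖(K ^ n) h‖ ≤ ‖K ^ n‖ * ‖h‖ := (K ^ n).le_opNorm h
        _ ≤ (C * t ^ n) * (‖h‖ + 1) := by
            gcongr
            · exact hC n
            · linarith
        _ = _ := by ring
    · intro s hs hsρ
      refine aux_lower (fun n => ‖K ^ n‖) (fun n => ‖(K ^ n) h‖) (fun n => norm_nonneg _) i
        (specRad K) (hs.trans hsρ) hρa hup ‖K ^ i‖ (fun n => ?_)
        (fun ε hε => aux_key hp_top K hKp h hh i hi ε hε) s hs hsρ
      have : (K ^ (n + i)) h = (K ^ i) ((K ^ n) h) := by rw [add_comm, pow_add]; rfl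
      simp only [this]
      exact (K ^ i).le_opNorm _
  refine main.congr fun n => ?_
  rw [aux_norm_eq hp_top, ← Real.rpow_mul (integral_nonneg fun x => by positivity)]
  congr 1
  rw [one_div_mul_one_div]
end

section
/- Suppose K is a positive compact bounded linear operator on L_p(X,π), h ∈ L_p(X,π) satisfies h(x) > 0 for π-almost every x, and there is δ > 0 such that Kh ≤ δ h π-almost everywhere. Then ρ(K) ≤ δ. -/
open MeasureTheory Filter Topology ENNReal

lemma aux_dense {X : Type*} [MeasurableSpace X] (π : Measure X)
    (p : ℝ≥0∞) [Fact (1 ≤ p)] (hp_top : p ≠ ⊤)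
    (h : Lp ℝ p π) (hh : ∀ᵐ x ∂π, 0 < h x) (f : Lp ℝ p π) (ε : ℝ) (hε : 0 < ε) :
    ∃ g : Lp ℝ p π, ‖f - g‖ < ε ∧ ∃ c : ℝ, 0 ≤ c ∧ ∀ᵐ x ∂π, |g x| ≤ c * h x := by
  let F : ℕ → Lp ℝ p π := fun k => (f ⊓ ((k : ℝ) • h)) ⊔ (-((k : ℝ) • h))
  have hF : ∀ k : ℕ, ∀ᵐ x ∂π, F k x = max (min (f x) (k * h x)) (-(k * h x)) := by
    intro k
    filter_upwards [Lp.coeFn_sup (f ⊓ ((k : ℝ) • h)) (-((k : ℝ) • h)),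
      Lp.coeFn_inf f ((k : ℝ) • h), Lp.coeFn_neg ((k : ℝ) • h),
      Lp.coeFn_smul (k : ℝ) h] with x h1 h2 h3 h4
    simp only [F]
    rw [h1, Pi.sup_apply, h2, Pi.inf_apply, h3, Pi.neg_apply, h4]
    simp
  have hp0 : p ≠ 0 := (lt_of_lt_of_le zero_lt_one (Fact.out : 1 ≤ p)).ne'
  have hpr : 0 < p.toReal := ENNReal.toReal_pos hp0 hp_top
  have hlim : Tendsto F atTop (𝓝 f) := by
    rw [Lp.tendsto_Lp_iff_tendsto_eLpNorm']
    simp_rw [eLpNorm_eq_lintegral_rpow_enorm_toReal hp0 hp_top]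
    have key : Tendsto (fun k => ∫⁻ x, ‖(⇑(F k) - ⇑f) x‖ₑ ^ p.toReal ∂π) atTop
        (𝓝 (∫⁻ _, 0 ∂π)) := by
      apply tendsto_lintegral_of_dominated_convergence' (fun x => ‖f x‖ₑ ^ p.toReal)
      · intro k
        exact ((Lp.aestronglyMeasurable (F k)).sub
          (Lp.aestronglyMeasurable f)).enorm.pow_const _
      · intro k
        filter_upwards [hF k, hh] with x hx hpos
        gcongr
        rw [enorm_le_iff_norm_le, Pi.sub_apply, hx, Real.norm_eq_abs, Real.norm_eq_abs]
        have hk : 0 ≤ (k : ℝ) * h x := by positivity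
        grind
      · have := lintegral_rpow_enorm_lt_top_of_eLpNorm_lt_top hp0 hp_top (Lp.eLpNorm_lt_top f)
        exact this.ne
      · filter_upwards [ae_all_iff.2 hF, hh] with x hx hpos
        obtain ⟨N, hN⟩ := exists_nat_ge (|f x| / h x)
        apply tendsto_const_nhds.congr'
        filter_upwards [eventually_ge_atTop N] with k hk
        have hk' : (N : ℝ) ≤ k := by exact_mod_cast hk
        have : |f x| ≤ k * h x := by
          rw [← div_le_iff₀ hpos]; linarith
        have h2 : F k x = f x := by
          rw [hx k]; grind
        simp [h2, hpr]
    rw [lintegral_zero] at key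
    have := key.ennrpow_const (1 / p.toReal)
    rwa [ENNReal.zero_rpow_of_pos (by positivity)] at this
  obtain ⟨N, hN⟩ := (Metric.tendsto_atTop.1 hlim) ε hε
  refine ⟨F N, ?_, N, by positivity, ?_⟩
  · have := hN N le_rfl
    rwa [dist_comm, dist_eq_norm] at this
  · filter_upwards [hF N, hh] with x hx hpos
    have hk : 0 ≤ (N : ℝ) * h x := by positivity
    rw [hx]; grind

lemma aux_orbit {X : Type*} [MeasurableSpace X] (π : Measure X)
    (p : ℝ≥0∞) [Fact (1 ≤ p)]
    (K : Lp ℝ p π →L[ℝ] Lp ℝ p π)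
    (hK_pos : ∀ g : Lp ℝ p π, (∀ᵐ x ∂π, 0 ≤ g x) → ∀ᵐ x ∂π, 0 ≤ (K g : X → ℝ) x)
    (h : Lp ℝ p π) (hh : ∀ᵐ x ∂π, 0 < h x)
    (δ : ℝ) (hδ : 0 < δ)
    (hdom : ∀ᵐ x ∂π, (K h : X → ℝ) x ≤ δ * h x)
    (g : Lp ℝ p π) (c : ℝ) (hc : 0 ≤ c) (hg : ∀ᵐ x ∂π, |g x| ≤ c * h x) (n : ℕ) :
    ‖(K ^ n) g‖ ≤ c * δ ^ n * ‖h‖ := by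
  have step : ∀ (g : Lp ℝ p π) (c : ℝ), 0 ≤ c → (∀ᵐ x ∂π, |g x| ≤ c * h x) →
      ∀ᵐ x ∂π, |(K g : X → ℝ) x| ≤ c * δ * h x := by
    intro g c hc hg
    have h1 := hK_pos (c • h - g) (by
      filter_upwards [Lp.coeFn_sub (c • h) g, Lp.coeFn_smul c h, hg] with x a b e
      rw [a, Pi.sub_apply, b, Pi.smul_apply, smul_eq_mul]
      linarith [le_abs_self (g x)])
    have h2 := hK_pos (c • h + g) (by
      filter_upwards [Lp.coeFn_add (c • h) g, Lp.coeFn_smul c h, hg] with x a b e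
      rw [a, Pi.add_apply, b, Pi.smul_apply, smul_eq_mul]
      linarith [neg_abs_le (g x)])
    rw [map_sub, map_smul] at h1
    rw [map_add, map_smul] at h2
    filter_upwards [h1, h2, Lp.coeFn_sub (c • K h) (K g), Lp.coeFn_add (c • K h) (K g),
      Lp.coeFn_smul c (K h), hdom] with x a b e f i j
    rw [e, Pi.sub_apply, i, Pi.smul_apply, smul_eq_mul] at a
    rw [f, Pi.add_apply, i, Pi.smul_apply, smul_eq_mul] at b
    have := mul_le_mul_of_nonneg_left j hc
    rw [abs_le]
    constructor <;> linarith
  have all : ∀ᵐ x ∂π, |((K ^ n) g : X → ℝ) x| ≤ c * δ ^ n * h x := by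
    induction n with
    | zero => simpa using hg
    | succ n ih =>
      have := step _ _ (by positivity) ih
      rw [pow_succ', mul_apply_eq_comp]
      filter_upwards [this] with x hx
      rw [pow_succ]; linarith
  apply Lp.norm_le_mul_norm_of_ae_le_mul
  filter_upwards [all, hh] with x hx hp
  rwa [Real.norm_eq_abs, Real.norm_eq_abs, abs_of_pos hp]

/-- **Krasnosel'skii-type spectral bound.**  Let `(X, F, π)` be a probability
space, `p ∈ [1, ∞)`, and `K` a positive compact bounded linear operator on
`L_p(X,π)`.  If `h ∈ L_p(X,π)` is π-a.e. strictly positive (a quasi-interior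
point of the positive cone) and `K h ≤ δ h` π-a.e. for some `δ > 0`, then
`ρ(K) ≤ δ`. -/
theorem specRad_le_of_dominated_eigenvector
    {X : Type*} [MeasurableSpace X] (π : Measure X) [IsProbabilityMeasure π]
    (p : ℝ≥0∞) [Fact (1 ≤ p)] (hp_top : p ≠ ⊤)
    (K : Lp ℝ p π →L[ℝ] Lp ℝ p π)
    (hK_pos : ∀ g : Lp ℝ p π, (∀ᵐ x ∂π, 0 ≤ g x) → ∀ᵐ x ∂π, 0 ≤ (K g : X → ℝ) x)
    (hK_compact : IsCompactOperator ⇑K)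
    (h : Lp ℝ p π) (hh : ∀ᵐ x ∂π, 0 < h x)
    (δ : ℝ) (hδ : 0 < δ)
    (hdom : ∀ᵐ x ∂π, (K h : X → ℝ) x ≤ δ * h x) :
    specRad K ≤ δ := by
  obtain ⟨t, ht, hcov⟩ := Metric.totallyBounded_iff.1
    ((hK_compact.isCompact_closure_image_closedBall (f := (K : Lp ℝ p π →ₗ[ℝ] Lp ℝ p π)) 1).totallyBounded)
    (δ / 4) (by positivity)
  choose g hg c hc hgc using fun f : Lp ℝ p π => aux_dense π p hp_top h hh f (δ / 4) (by positivity)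
  obtain ⟨C₀, hC₀⟩ := (ht.image c).bddAbove
  have hC : ∀ y ∈ t, c y ≤ C₀ := fun y hy => hC₀ ⟨y, hy, rfl⟩
  set C : ℝ := max C₀ 0 * ‖h‖ with hCdef
  have hC0 : 0 ≤ C := by positivity
  have hrec : ∀ n : ℕ, ‖K ^ (n + 1)‖ ≤ C * δ ^ n + ‖K ^ n‖ * (δ / 2) := by
    intro n
    apply ContinuousLinearMap.opNorm_le_of_unit_norm (by positivity)
    intro x hx
    have hmem : K x ∈ ⋃ y ∈ t, Metric.ball y (δ / 4) :=
      hcov (subset_closure ⟨x, by simp [hx], rfl⟩)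
    simp only [Set.mem_iUnion] at hmem
    obtain ⟨y, hy, hxy⟩ := hmem
    rw [Metric.mem_ball, dist_eq_norm] at hxy
    have e : (K ^ (n + 1)) x = (K ^ n) (g y) + (K ^ n) ((K x - y) + (y - g y)) := by
      rw [pow_succ, mul_apply_eq_comp, ← map_add]
      congr 1
      abel
    have h1 := aux_orbit π p K hK_pos h hh δ hδ hdom (g y) (c y) (hc y) (hgc y) n
    have h2 : ‖(K ^ n) ((K x - y) + (y - g y))‖ ≤ ‖K ^ n‖ * (δ / 2) := by
      refine (ContinuousLinearMap.le_opNorm _ _).trans ?_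
      gcongr
      refine (norm_add_le _ _).trans ?_
      linarith [hg y]
    have h3 : c y * δ ^ n * ‖h‖ ≤ C * δ ^ n := by
      have : c y ≤ max C₀ 0 := (hC y hy).trans (le_max_left _ _)
      calc c y * δ ^ n * ‖h‖ ≤ max C₀ 0 * δ ^ n * ‖h‖ := by gcongr
        _ = C * δ ^ n := by rw [hCdef]; ring
    rw [e]
    refine (norm_add_le _ _).trans ?_
    linarith
  set M : ℝ := max (2 * C / δ) 1 with hM
  have hM1 : 1 ≤ M := le_max_right _ _
  have hMC : C ≤ M * δ / 2 := by
    have : 2 * C / δ ≤ M := le_max_left _ _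
    rw [div_le_iff₀ hδ] at this
    linarith
  have bound : ∀ n : ℕ, ‖K ^ n‖ ≤ M * δ ^ n := by
    intro n
    induction n with
    | zero =>
      rw [pow_zero, pow_zero, mul_one]
      exact ContinuousLinearMap.norm_id_le.trans hM1
    | succ n ih =>
      have hn : 0 ≤ δ ^ n := by positivity
      calc ‖K ^ (n + 1)‖ ≤ C * δ ^ n + ‖K ^ n‖ * (δ / 2) := hrec n
        _ ≤ (M * δ / 2) * δ ^ n + (M * δ ^ n) * (δ / 2) := by gcongr
        _ = M * δ ^ (n + 1) := by ring
  have lim : Tendsto (fun n : ℕ => M ^ (1 / ((n : ℝ) + 1)) * δ) atTop (𝓝 δ) := by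
    have h1 : Tendsto (fun n : ℕ => M ^ (1 / ((n : ℝ) + 1))) atTop (𝓝 (M ^ (0 : ℝ))) :=
      tendsto_const_nhds.rpow tendsto_one_div_add_atTop_nhds_zero_nat (Or.inl (by positivity))
    simpa using h1.mul_const δ
  refine ge_of_tendsto' lim fun n => ?_
  have hbdd : BddBelow (Set.range fun n : ℕ => ‖K ^ (n + 1)‖ ^ (1 / (n + 1) : ℝ)) :=
    ⟨0, by rintro _ ⟨n, rfl⟩; positivity⟩
  refine (ciInf_le hbdd n).trans ?_
  calc ‖K ^ (n + 1)‖ ^ (1 / (n + 1) : ℝ) ≤ (M * δ ^ (n + 1)) ^ (1 / (n + 1) : ℝ) := by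
        gcongr
        exact bound (n + 1)
    _ = M ^ (1 / ((n : ℝ) + 1)) * δ := by
        rw [Real.mul_rpow (by positivity) (by positivity)]
        congr 1
        rw [← Real.rpow_natCast, ← Real.rpow_mul hδ.le]
        push_cast
        rw [mul_one_div_cancel (by positivity), Real.rpow_one]
end

section
/- Let K be a bounded linear operator on a real Banach space E and let N ⊆ E. Then sup{ ρ(K,h) : h ∈ N } = sup{ ρ(K,h) : h ∈ M }, where M = span{ K^m h : h ∈ N, m ≥ 0 } is the linear span of the K-orbit of N. -/
open Filter Topology

/-- The local spectral radius `ρ(K, h) = limsup_n ‖K^n h‖^(1/n)`. -/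
noncomputable def locSpecRad {E : Type*} [NormedAddCommGroup E] [NormedSpace ℝ E]
    (K : E →L[ℝ] E) (h : E) : ℝ :=
  Filter.limsup (fun n : ℕ => ‖(K ^ n) h‖ ^ (1 / n : ℝ)) Filter.atTop

theorem lsr_bound_aux {E : Type*} [NormedAddCommGroup E] [NormedSpace ℝ E]
    (K : E →L[ℝ] E) (h : E) (r C : ℝ) (hr : 0 < r) (hC : ∀ n, ‖(K ^ n) h‖ ≤ C * r ^ n) :
    ∃ v : ℕ → ℝ, Tendsto v atTop (𝓝 r) ∧
      ∀ᶠ n : ℕ in atTop, ‖(K ^ n) h‖ ^ (1 / n : ℝ) ≤ v n := by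
  refine ⟨fun n => (|C| + 1) ^ (1 / n : ℝ) * r, ?_, ?_⟩
  · have h1 : Tendsto (fun n : ℕ => (1 / n : ℝ)) atTop (𝓝 0) :=
      tendsto_one_div_atTop_nhds_zero_nat
    have hp : (|C| + 1) ≠ 0 := by positivity
    have h2 := (Real.continuousAt_const_rpow (a := |C| + 1) (b := 0) hp).tendsto.comp h1
    simpa using h2.mul_const r
  · filter_upwards [eventually_ge_atTop 1] with n hn
    have h1 : ‖(K ^ n) h‖ ≤ (|C| + 1) * r ^ n :=
      (hC n).trans (by gcongr; linarith [le_abs_self C])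
    calc ‖(K ^ n) h‖ ^ (1 / n : ℝ) ≤ ((|C| + 1) * r ^ n) ^ (1 / n : ℝ) := by gcongr
      _ = (|C| + 1) ^ (1 / n : ℝ) * r := by
        rw [Real.mul_rpow (by positivity) (by positivity), one_div,
          Real.pow_rpow_inv_natCast hr.le (by omega)]

theorem lsr_cobdd {E : Type*} [NormedAddCommGroup E] [NormedSpace ℝ E]
    (K : E →L[ℝ] E) (h : E) :
    IsCoboundedUnder (· ≤ ·) atTop (fun n : ℕ => ‖(K ^ n) h‖ ^ (1 / n : ℝ)) :=
  IsBoundedUnder.isCoboundedUnder_le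
    (isBoundedUnder_of ⟨0, fun n => by positivity⟩)

theorem lsr_le {E : Type*} [NormedAddCommGroup E] [NormedSpace ℝ E]
    (K : E →L[ℝ] E) (h : E) (r C : ℝ) (hr : 0 < r) (hC : ∀ n, ‖(K ^ n) h‖ ≤ C * r ^ n) :
    locSpecRad K h ≤ r := by
  obtain ⟨v, hv, hle⟩ := lsr_bound_aux K h r C hr hC
  rw [← hv.limsup_eq]
  exact limsup_le_limsup hle (lsr_cobdd K h) hv.isBoundedUnder_le

theorem lsr_triv {E : Type*} [NormedAddCommGroup E] [NormedSpace ℝ E]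
    (K : E →L[ℝ] E) (h : E) (n : ℕ) : ‖(K ^ n) h‖ ≤ ‖h‖ * (‖K‖ + 1) ^ n := by
  induction n with
  | zero => simp
  | succ n ih =>
    rw [pow_succ']
    calc ‖K ((K ^ n) h)‖ ≤ ‖K‖ * ‖(K ^ n) h‖ := K.le_opNorm _
      _ ≤ (‖K‖ + 1) * (‖h‖ * (‖K‖ + 1) ^ n) := by gcongr; linarith
      _ = _ := by ring

theorem lsr_bdd {E : Type*} [NormedAddCommGroup E] [NormedSpace ℝ E]
    (K : E →L[ℝ] E) (h : E) :
    IsBoundedUnder (· ≤ ·) atTop (fun n : ℕ => ‖(K ^ n) h‖ ^ (1 / n : ℝ)) := by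
  obtain ⟨v, hv, hle⟩ := lsr_bound_aux K h (‖K‖ + 1) ‖h‖ (by positivity) (lsr_triv K h)
  exact hv.isBoundedUnder_le.mono_le hle

theorem lsr_nonneg {E : Type*} [NormedAddCommGroup E] [NormedSpace ℝ E]
    (K : E →L[ℝ] E) (h : E) : 0 ≤ locSpecRad K h :=
  le_limsup_of_frequently_le (Frequently.of_forall fun n => by positivity) (lsr_bdd K h)

theorem lsr_growth {E : Type*} [NormedAddCommGroup E] [NormedSpace ℝ E]
    (K : E →L[ℝ] E) (h : E) (r : ℝ) (hr : locSpecRad K h < r) :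
    ∃ C, ∀ n, ‖(K ^ n) h‖ ≤ C * r ^ n := by
  have r0 : 0 < r := (lsr_nonneg K h).trans_lt hr
  have h1 := eventually_lt_of_limsup_lt hr (lsr_bdd K h)
  have h2 : IsBoundedUnder (· ≤ ·) atTop (fun n : ℕ => ‖(K ^ n) h‖ / r ^ n) := by
    refine ⟨1, ?_⟩
    rw [eventually_map]
    filter_upwards [h1, eventually_ge_atTop 1] with n hn hn1
    rw [div_le_one (by positivity)]
    calc ‖(K ^ n) h‖ = (‖(K ^ n) h‖ ^ (1 / n : ℝ)) ^ n := by
          rw [one_div, Real.rpow_inv_natCast_pow (norm_nonneg _) (by omega)]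
      _ ≤ r ^ n := by gcongr
  obtain ⟨C, hC⟩ := h2.bddAbove_range
  refine ⟨C, fun n => ?_⟩
  rw [← div_le_iff₀ (by positivity)]
  exact hC ⟨n, rfl⟩

/-- **Daneš' corollary.**  For a bounded linear operator `K` on a real Banach
space `E` and any `N ⊆ E`, the supremum of the local spectral radii of `K`
over `N` equals the supremum over `M = span { K^m h : h ∈ N, m ≥ 0 }`, the
linear span of the `K`-orbit of `N`. -/
theorem sup_locSpecRad_orbit_span
    {E : Type*} [NormedAddCommGroup E] [NormedSpace ℝ E] [CompleteSpace E]
    (K : E →L[ℝ] E) (N : Set E) :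
    sSup (locSpecRad K '' N) =
      sSup (locSpecRad K ''
        (Submodule.span ℝ {x : E | ∃ h ∈ N, ∃ m : ℕ, x = (K ^ m) h} : Set E)) := by
  have hbdd : ∀ S : Set E, BddAbove (locSpecRad K '' S) := by
    rintro S
    refine ⟨‖K‖ + 1, ?_⟩
    rintro _ ⟨h, -, rfl⟩
    exact lsr_le K h _ ‖h‖ (by positivity) (lsr_triv K h)
  have hnn : ∀ S : Set E, 0 ≤ sSup (locSpecRad K '' S) := by
    intro S
    apply Real.sSup_nonneg
    rintro _ ⟨h, -, rfl⟩
    exact lsr_nonneg K h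
  apply le_antisymm
  · apply Real.sSup_le _ (hnn _)
    rintro _ ⟨h, hh, rfl⟩
    exact le_csSup (hbdd _) ⟨h, Submodule.subset_span ⟨h, hh, 0, by simp⟩, rfl⟩
  · apply Real.sSup_le _ (hnn _)
    rintro _ ⟨x, hx, rfl⟩
    refine le_of_forall_gt_imp_ge_of_dense fun r hr => ?_
    have r0 : 0 < r := (hnn N).trans_lt hr
    suffices H : ∃ C, ∀ n, ‖(K ^ n) x‖ ≤ C * r ^ n by
      obtain ⟨C, hC⟩ := H
      exact lsr_le K x r C r0 hC
    induction hx using Submodule.span_induction with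
    | mem x hx =>
      obtain ⟨h, hh, m, rfl⟩ := hx
      obtain ⟨C, hC⟩ := lsr_growth K h r ((le_csSup (hbdd N) ⟨h, hh, rfl⟩).trans_lt hr)
      refine ⟨C * r ^ m, fun n => ?_⟩
      have := hC (n + m)
      rw [pow_add, pow_add] at this
      calc _ ≤ _ := this
        _ = _ := by ring
    | zero => exact ⟨0, by simp⟩
    | add x y _ _ hx hy =>
      obtain ⟨C, hC⟩ := hx
      obtain ⟨D, hD⟩ := hy
      refine ⟨C + D, fun n => ?_⟩
      rw [map_add, add_mul]
      exact (norm_add_le _ _).trans (add_le_add (hC n) (hD n))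
    | smul a x _ hx =>
      obtain ⟨C, hC⟩ := hx
      refine ⟨‖a‖ * C, fun n => ?_⟩
      rw [map_smul, norm_smul, mul_assoc]
      exact mul_le_mul_of_nonneg_left (hC n) (norm_nonneg _)
end

section
/- Let (T_n) and T be bounded linear operators on L_p(X,π) such that 0 ≤ T_n ≤ T_{n+1} ≤ T for all n ∈ ℕ, in the sense that for every f ∈ L_p(X,π) with f ≥ 0 π-almost everywhere one has 0 ≤ T_n f ≤ T_{n+1} f ≤ T f π-almost everywhere. If ‖T_n f − T f‖_p → 0 as n → ∞ for every f in the positive cone, and T^i is compact for some i ∈ ℕ, then ρ(T_n) increases monotonically to ρ(T). -/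
open MeasureTheory Filter Topology ENNReal

set_option linter.unusedSectionVars false

lemma no_inf_eig {E : Type*} [NormedAddCommGroup E] [NormedSpace ℝ E] (A : E →L[ℝ] E)
    (hA : IsCompactOperator A) (c : ℝ) (hc : 0 < c) (l : ℕ → ℝ) (linj : Function.Injective l)
    (hl : ∀ n, c ≤ l n) (u : ℕ → E) (hu : ∀ n, u n ≠ 0) (hAu : ∀ n, A (u n) = l n • u n) :
    False := by
  have hli : LinearIndependent ℝ u := by
    refine Module.End.eigenvectors_linearIndependent' (A : E →ₗ[ℝ] E) l linj u ?_
    intro n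
    exact ⟨Module.End.mem_eigenspace_iff.2 (hAu n), hu n⟩
  let M : ℕ → Submodule ℝ E := fun n => Submodule.span ℝ (u '' Set.Iio n)
  have hMmono : Monotone M := fun a b hab =>
    Submodule.span_mono (Set.image_mono (Set.Iio_subset_Iio hab))
  have hMfd : ∀ n, FiniteDimensional ℝ (M n) := fun n =>
    FiniteDimensional.span_of_finite ℝ ((Set.finite_Iio n).image u)
  have hMA : ∀ n, ∀ x ∈ M n, A x ∈ M n := by
    intro n x hx
    induction hx using Submodule.span_induction with
    | mem x h =>
      obtain ⟨j, hj, rfl⟩ := h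
      rw [hAu]
      exact Submodule.smul_mem _ _ (Submodule.subset_span ⟨j, hj, rfl⟩)
    | zero => simp
    | add x y _ _ hx hy => rw [map_add]; exact add_mem hx hy
    | smul a x _ hx => rw [map_smul]; exact Submodule.smul_mem _ _ hx
  have hnot : ∀ n, u n ∉ M n := fun n => hli.notMem_span_image (by simp)
  have hsucc : ∀ n, M (n+1) = Submodule.span ℝ (insert (u n) (u '' Set.Iio n)) := by
    intro n
    have : Set.Iio (n+1) = insert n (Set.Iio n) := by
      ext j; simp only [Set.mem_Iio, Set.mem_insert_iff]; omega
    simp only [M, this, Set.image_insert_eq]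
  have hx : ∀ n, ∃ x ∈ M (n+1), ‖x‖ ≤ 3 ∧ ∀ y ∈ M n, 1 ≤ ‖x - y‖ := by
    intro n
    have := hMfd n
    have := hMfd (n+1)
    obtain ⟨x, hx1, hx2⟩ := riesz_lemma_of_norm_lt (𝕜 := ℝ) (E := M (n+1)) (c := 2) (by norm_num)
      (R := 3) (by norm_num) (F := (M n).comap (M (n+1)).subtype)
      (Submodule.closed_of_finiteDimensional _)
      ⟨⟨u n, Submodule.subset_span ⟨n, by simp, rfl⟩⟩, fun h => hnot n h⟩
    refine ⟨x, x.2, hx1, fun y hy => ?_⟩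
    exact hx2 ⟨y, hMmono (Nat.le_succ n) hy⟩ hy
  choose x hxM hx3 hx1 using hx
  have hsep : ∀ m n, m < n → c ≤ ‖A (x n) - A (x m)‖ := by
    intro m n hmn
    have h1 : l n • x n - A (x n) ∈ M n := by
      have := hxM n
      rw [hsucc, Submodule.mem_span_insert] at this
      obtain ⟨a, z, hz, h⟩ := this
      have : l n • x n - A (x n) = l n • z - A z := by
        rw [h]; simp only [smul_add, map_add, map_smul, hAu, smul_comm a (l n)]; abel
      rw [this]
      exact sub_mem (Submodule.smul_mem _ _ hz) (hMA n z hz)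
    have h2 : A (x m) ∈ M n := hMA n _ (hMmono (by omega : m + 1 ≤ n) (hxM m))
    have hlp : 0 < l n := hc.trans_le (hl n)
    have h3 := hx1 n ((l n)⁻¹ • (l n • x n - A (x n) + A (x m)))
      (Submodule.smul_mem _ _ (add_mem h1 h2))
    have h4 : A (x n) - A (x m) = l n • (x n - (l n)⁻¹ • (l n • x n - A (x n) + A (x m))) := by
      rw [smul_sub, smul_smul, mul_inv_cancel₀ hlp.ne', one_smul]; abel
    rw [h4, norm_smul, Real.norm_of_nonneg hlp.le]
    nlinarith [hl n]
  obtain ⟨K, hK, hKs⟩ := IsCompactOperator.image_closedBall_subset_compact (𝕜₁ := ℝ)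
    (f := (A : E →ₗ[ℝ] E)) hA 3
  obtain ⟨v, -, φ, hφ, hlim⟩ := hK.tendsto_subseq (x := fun n => A (x n))
    (fun n => hKs ⟨x n, by simpa using hx3 n, rfl⟩)
  have hcau := hlim.cauchySeq
  rw [Metric.cauchySeq_iff] at hcau
  obtain ⟨N, hN⟩ := hcau c hc
  have := hN (N+1) (by omega) N le_rfl
  rw [dist_eq_norm] at this
  exact absurd this (not_lt.2 (hsep _ _ (hφ (Nat.lt_succ_self N))))

section abstractPart
variable {E : Type*} [NormedAddCommGroup E] [NormedSpace ℝ E] [Lattice E] [HasSolidNorm E]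
  [IsOrderedAddMonoid E] [PosSMulMono ℝ E] [OrderClosedTopology E]

lemma norm_le_of_nonneg_le {a b : E} (ha : 0 ≤ a) (hab : a ≤ b) : ‖a‖ ≤ ‖b‖ := by
  apply norm_le_norm_of_abs_le_abs
  rwa [abs_of_nonneg ha, abs_of_nonneg (ha.trans hab)]

lemma op_mono {K : E →L[ℝ] E} (hK : ∀ f, 0 ≤ f → 0 ≤ K f) {a b : E} (hab : a ≤ b) :
    K a ≤ K b := by
  have := hK _ (sub_nonneg.2 hab)
  rwa [map_sub, sub_nonneg] at this

lemma op_pow_nonneg {K : E →L[ℝ] E} (hK : ∀ f, 0 ≤ f → 0 ≤ K f) (k : ℕ) :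
    ∀ f, 0 ≤ f → 0 ≤ (K ^ k) f := by
  induction k with
  | zero => intro f hf; simpa using hf
  | succ k ih => intro f hf; rw [pow_succ]; exact ih _ (hK f hf)

lemma op_pow_le {S K : E →L[ℝ] E} (hS : ∀ f, 0 ≤ f → 0 ≤ S f) (hSK : ∀ f, 0 ≤ f → S f ≤ K f)
    (k : ℕ) : ∀ f, 0 ≤ f → (S ^ k) f ≤ (K ^ k) f := by
  have hK : ∀ f, 0 ≤ f → 0 ≤ K f := fun f hf => (hS f hf).trans (hSK f hf)
  induction k with
  | zero => intro f hf; simp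
  | succ k ih =>
    intro f hf
    rw [pow_succ, pow_succ]
    exact (ih _ (hS f hf)).trans (op_mono (op_pow_nonneg hK k) (hSK f hf))

lemma op_norm_le {S K : E →L[ℝ] E} (hS : ∀ f, 0 ≤ f → 0 ≤ S f) (hSK : ∀ f, 0 ≤ f → S f ≤ K f) :
    ‖S‖ ≤ ‖K‖ := by
  refine S.opNorm_le_bound (norm_nonneg _) fun f => ?_
  have h1 : |S f| ≤ abs (S (abs f)) := by
    rw [abs_of_nonneg (hS _ (abs_nonneg f))]
    refine abs_le'.2 ⟨op_mono hS (le_abs_self f), ?_⟩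
    rw [← map_neg]
    exact op_mono hS (neg_le_abs f)
  calc ‖S f‖ ≤ ‖S (abs f)‖ := norm_le_norm_of_abs_le_abs h1
    _ ≤ ‖K (abs f)‖ := norm_le_of_nonneg_le (hS _ (abs_nonneg f)) (hSK _ (abs_nonneg f))
    _ ≤ ‖K‖ * ‖abs f‖ := K.le_opNorm _
    _ = ‖K‖ * ‖f‖ := by rw [norm_abs_eq_norm]

lemma specRad_bdd (K : E →L[ℝ] E) :
    BddBelow (Set.range fun n : ℕ => ‖K ^ (n + 1)‖ ^ (1 / (n + 1) : ℝ)) :=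
  ⟨0, by rintro _ ⟨n, rfl⟩; positivity⟩

lemma specRad_mono {S K : E →L[ℝ] E} (hS : ∀ f, 0 ≤ f → 0 ≤ S f)
    (hSK : ∀ f, 0 ≤ f → S f ≤ K f) : specRad S ≤ specRad K := by
  refine ciInf_mono (specRad_bdd S) fun n => ?_
  refine Real.rpow_le_rpow (norm_nonneg _) ?_ (by positivity)
  exact op_norm_le (op_pow_nonneg hS _) (op_pow_le hS hSK _)

lemma specRad_nonneg (K : E →L[ℝ] E) : 0 ≤ specRad K :=
  Real.iInf_nonneg fun n => by positivity

lemma specRad_le_of_bound (K : E →L[ℝ] E) {l C : ℝ} (hl : 0 < l)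
    (h : ∀ k : ℕ, ‖K ^ k‖ ≤ C * l ^ k) : specRad K ≤ l := by
  have hC : ∀ k : ℕ, ‖K ^ k‖ ≤ (max C 1) * l ^ k := fun k =>
    (h k).trans (by gcongr; exact le_max_left _ _)
  have hC0 : 0 < max C 1 := lt_of_lt_of_le one_pos (le_max_right _ _)
  have h1 : ∀ n : ℕ, specRad K ≤ (max C 1) ^ (1 / ((n : ℝ) + 1)) * l := by
    intro n
    refine (ciInf_le (specRad_bdd K) n).trans ?_
    calc ‖K ^ (n + 1)‖ ^ (1 / (n + 1) : ℝ) ≤ ((max C 1) * l ^ (n+1)) ^ (1 / (n + 1) : ℝ) :=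
          Real.rpow_le_rpow (norm_nonneg _) (hC _) (by positivity)
      _ = (max C 1) ^ (1 / ((n : ℝ) + 1)) * l := by
          rw [Real.mul_rpow hC0.le (by positivity)]
          congr 1
          rw [← Real.rpow_natCast, ← Real.rpow_mul hl.le]
          push_cast
          rw [mul_one_div_cancel (by positivity), Real.rpow_one]
  have h2 : Tendsto (fun n : ℕ => (max C 1) ^ (1 / ((n : ℝ) + 1)) * l) atTop
      (𝓝 ((max C 1) ^ (0 : ℝ) * l)) := by
    refine Tendsto.mul_const l ?_
    exact ((Real.continuousAt_const_rpow hC0.ne').tendsto).comp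
      (tendsto_one_div_add_atTop_nhds_zero_nat)
  rw [Real.rpow_zero, one_mul] at h2
  exact ge_of_tendsto' h2 h1

lemma resolvent_exists [CompleteSpace E] {K : E →L[ℝ] E} (hK : ∀ f, 0 ≤ f → 0 ≤ K f) {l : ℝ}
    (hl0 : 0 < l)
    (hl : specRad K < l) {f : E} (hf : 0 ≤ f) : ∃ y, 0 ≤ y ∧ l • y = K y + f := by
  obtain ⟨m, hm⟩ := exists_lt_of_ciInf_lt hl
  have hm' : ‖K ^ (m+1)‖ < l ^ (m+1) := by
    have := Real.rpow_lt_rpow (by positivity) hm (z := (m+1 : ℝ)) (by positivity)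
    rw [← Real.rpow_mul (norm_nonneg _), one_div_mul_cancel (by positivity), Real.rpow_one] at this
    exact_mod_cast this
  set K' : E →L[ℝ] E := l⁻¹ • K with hK'
  have hK'p : ∀ f, 0 ≤ f → 0 ≤ K' f := fun f hf => smul_nonneg (by positivity) (hK f hf)
  have hlt : ‖K' ^ (m+1)‖ < 1 := by
    rw [hK', smul_pow, norm_smul, Real.norm_of_nonneg (by positivity), inv_pow]
    rw [inv_mul_lt_iff₀ (by positivity)]
    simpa using hm'
  set G : E →L[ℝ] E := ∑' k : ℕ, (K' ^ (m+1)) ^ k with hG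
  have hGs : Summable fun k : ℕ => (K' ^ (m+1)) ^ k := summable_geometric_of_norm_lt_one hlt
  have hGf : 0 ≤ G f := by
    have h1 := (ContinuousLinearMap.apply ℝ E f).hasSum hGs.hasSum
    have h2 : ∀ N : ℕ, 0 ≤ ∑ k ∈ Finset.range N, ((K' ^ (m+1)) ^ k) f := fun N =>
      Finset.sum_nonneg fun k _ => op_pow_nonneg (op_pow_nonneg hK'p _) _ f hf
    exact ge_of_tendsto' h1.tendsto_sum_nat h2
  have hmul : (1 - K') * ((∑ j ∈ Finset.range (m+1), K' ^ j) * G) = 1 := by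
    rw [← mul_assoc, mul_neg_geom_sum, hG]
    exact mul_neg_geom_series _ hlt
  set z := (∑ j ∈ Finset.range (m+1), K' ^ j) (G f) with hz
  have hz0 : 0 ≤ z := by
    rw [hz, _root_.sum_apply]
    exact Finset.sum_nonneg fun k _ => op_pow_nonneg hK'p _ _ hGf
  have hzf : z - l⁻¹ • K z = f := by
    have := congrArg (fun A : E →L[ℝ] E => A f) hmul
    exact this
  refine ⟨l⁻¹ • z, smul_nonneg (by positivity) hz0, ?_⟩
  rw [smul_smul, mul_inv_cancel₀ hl0.ne', one_smul, map_smul, ← hzf]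
  abel

lemma pow_apply_tendsto (T : ℕ → E →L[ℝ] E) (K : E →L[ℝ] E)
    (hb : ∀ n, ‖T n‖ ≤ ‖K‖)
    (hconv : ∀ f, 0 ≤ f → Tendsto (fun n => T n f) atTop (𝓝 (K f)))
    (hpos : ∀ f, 0 ≤ f → 0 ≤ K f) (k : ℕ) :
    ∀ f, 0 ≤ f → Tendsto (fun n => (T n ^ k) f) atTop (𝓝 ((K ^ k) f)) := by
  induction k with
  | zero => intro f hf; simp
  | succ k ih =>
    intro f hf
    have h1 := ih f hf
    simp only [pow_succ']
    change Tendsto (fun n => T n ((T n ^ k) f)) atTop (𝓝 (K ((K ^ k) f)))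
    have h2 := hconv _ (op_pow_nonneg hpos k f hf)
    have h3 : Tendsto (fun n => T n ((T n ^ k) f - (K ^ k) f)) atTop (𝓝 0) := by
      refine squeeze_zero_norm (a := fun n => ‖K‖ * ‖(T n ^ k) f - (K ^ k) f‖) (fun n => ?_) ?_
      · exact (T n).le_of_opNorm_le (hb n) _
      · have := (tendsto_iff_norm_sub_tendsto_zero.1 h1).const_mul ‖K‖
        simpa using this
    have := h3.add h2
    simpa using this

/-- Either the orbit of `f` is bounded relative to `l ^ k`, or there are
normalized approximate eigenvectors. -/
lemma dichotomy [CompleteSpace E] (T : ℕ → E →L[ℝ] E) (K : E →L[ℝ] E)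
    (hpos : ∀ n f, 0 ≤ f → 0 ≤ T n f) (hmono : ∀ m n, m ≤ n → ∀ f, 0 ≤ f → T m f ≤ T n f)
    (hle : ∀ n f, 0 ≤ f → T n f ≤ K f)
    (hconv : ∀ f, 0 ≤ f → Tendsto (fun n => T n f) atTop (𝓝 (K f)))
    {l : ℝ} (hl0 : 0 < l) (hl : ∀ n, specRad (T n) < l) {f : E} (hf : 0 ≤ f)
    (hno : ¬ ∀ k : ℕ, ∃ w : E, 0 ≤ w ∧ ‖w‖ = 1 ∧ T k w ≤ l • w ∧
      l • w ≤ K w + ((k : ℝ) + 1)⁻¹ • f) :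
    ∃ B : ℝ, ∀ j : ℕ, ‖(K ^ j) f‖ ≤ B * l ^ j := by
  push Not at hno
  obtain ⟨k, hk⟩ := hno
  have hKpos : ∀ f, 0 ≤ f → 0 ≤ K f := fun f hf => (hpos 0 f hf).trans (hle 0 f hf)
  refine ⟨l * (k + 1), fun j => ?_⟩
  have hnorm : ∀ n, k ≤ n → ‖(T n ^ j) f‖ ≤ l * (k + 1) * l ^ j := by
    intro n hn
    obtain ⟨y, hy0, hy⟩ := resolvent_exists (hpos n) hl0 (hl n) hf
    have hyk : ‖y‖ ≤ k + 1 := by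
      by_contra! hlt
      have hyp : 0 < ‖y‖ := lt_trans (by positivity) hlt
      have hw0 : 0 ≤ ‖y‖⁻¹ • y := smul_nonneg (by positivity) hy0
      have hlw : l • ‖y‖⁻¹ • y = T n (‖y‖⁻¹ • y) + ‖y‖⁻¹ • f := by
        rw [smul_comm, hy, smul_add, map_smul]
      refine hk (‖y‖⁻¹ • y) hw0 ?_ ?_ ?_
      · rw [norm_smul, norm_inv, norm_norm, inv_mul_cancel₀ hyp.ne']
      · rw [hlw]
        exact (hmono k n hn _ hw0).trans (le_add_of_nonneg_right (smul_nonneg (by positivity) hf))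
      · rw [hlw]
        refine add_le_add (hle n _ hw0) ?_
        have h1 : 0 ≤ ((k : ℝ) + 1)⁻¹ - ‖y‖⁻¹ := by
          rw [sub_nonneg]; gcongr
        have h2 := smul_nonneg h1 hf
        rwa [sub_smul, sub_nonneg] at h2
    have hTy : T n y ≤ l • y := by
      rw [hy]; exact le_add_of_nonneg_right hf
    have hfy : f ≤ l • y := by
      rw [hy]; exact le_add_of_nonneg_left (hpos n y hy0)
    have hpow : ∀ j : ℕ, (T n ^ j) y ≤ l ^ j • y := by
      intro j
      induction j with
      | zero => simp
      | succ j ih =>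
        rw [pow_succ']
        calc T n ((T n ^ j) y) ≤ T n (l ^ j • y) := op_mono (hpos n) ih
          _ = l ^ j • T n y := by rw [map_smul]
          _ ≤ l ^ j • l • y := smul_le_smul_of_nonneg_left hTy (by positivity)
          _ = l ^ (j+1) • y := by rw [smul_smul, pow_succ]
    have h1 : (T n ^ j) f ≤ (l * l ^ j) • y := by
      calc (T n ^ j) f ≤ (T n ^ j) (l • y) := op_mono (op_pow_nonneg (hpos n) j) hfy
        _ = l • (T n ^ j) y := by rw [map_smul]
        _ ≤ l • l ^ j • y := smul_le_smul_of_nonneg_left (hpow j) hl0.le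
        _ = _ := by rw [smul_smul]
    calc ‖(T n ^ j) f‖ ≤ ‖(l * l ^ j) • y‖ :=
          norm_le_of_nonneg_le (op_pow_nonneg (hpos n) j f hf) h1
      _ = l * l ^ j * ‖y‖ := by rw [norm_smul, Real.norm_of_nonneg (by positivity)]
      _ ≤ l * l ^ j * (k + 1) := by gcongr
      _ = _ := by ring
  have hb : ∀ n, ‖T n‖ ≤ ‖K‖ := fun n => op_norm_le (hpos n) (hle n)
  exact le_of_tendsto (pow_apply_tendsto T K hb hconv hKpos j f hf).norm
    (eventually_atTop.2 ⟨k, hnorm⟩)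

lemma specRad_le_of_orbits [CompleteSpace E] (K : E →L[ℝ] E) {l : ℝ} (hl0 : 0 < l)
    (h : ∀ f : E, 0 ≤ f → ∃ B : ℝ, ∀ j : ℕ, ‖(K ^ j) f‖ ≤ B * l ^ j) : specRad K ≤ l := by
  obtain ⟨C, hC⟩ := banach_steinhaus (g := fun j : ℕ => (l ^ j)⁻¹ • K ^ j) (by
    intro f
    obtain ⟨B1, h1⟩ := h (f⁺) (posPart_nonneg f)
    obtain ⟨B2, h2⟩ := h (f⁻) (negPart_nonneg f)
    refine ⟨B1 + B2, fun j => ?_⟩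
    have : (K ^ j) f = (K ^ j) (f⁺) - (K ^ j) (f⁻) := by
      rw [← map_sub, posPart_sub_negPart]
    rw [_root_.smul_apply, norm_smul, Real.norm_of_nonneg (by positivity),
      inv_mul_le_iff₀ (by positivity), this]
    refine (norm_sub_le _ _).trans ?_
    linarith [h1 j, h2 j])
  refine specRad_le_of_bound K (C := C) hl0 fun k => ?_
  have := hC k
  rw [norm_smul, Real.norm_of_nonneg (by positivity), inv_mul_le_iff₀ (by positivity)] at this
  linarith

end abstractPart

lemma hilbert_cauchy {H : Type*} [NormedAddCommGroup H] [InnerProductSpace ℝ H]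
    {α : Type*} (h : α → H) (C : ℕ → Set α) (hanti : Antitone C) (hne : ∀ k, (C k).Nonempty)
    (hb : ∀ a, ‖h a‖ ≤ 1)
    (hmid : ∀ k, ∀ a ∈ C k, ∀ b ∈ C k, ∃ c ∈ C k, inner ℝ (h a) (h b) = ‖h c‖ ^ 2) :
    ∃ a : ℕ → α, (∀ k, a k ∈ C k) ∧ CauchySeq (fun k => h (a k)) := by
  let S : ℕ → Set ℝ := fun k => (fun a => ‖h a‖ ^ 2) '' C k
  have hSne : ∀ k, (S k).Nonempty := fun k => (hne k).image _
  have hSbd : ∀ k, BddBelow (S k) := fun k => ⟨0, by rintro _ ⟨a, -, rfl⟩; positivity⟩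
  let I : ℕ → ℝ := fun k => sInf (S k)
  have hImono : Monotone I := fun j k hjk =>
    csInf_le_csInf (hSbd j) (hSne k) (Set.image_mono (hanti hjk))
  have hIle : ∀ k, ∀ a ∈ C k, I k ≤ ‖h a‖ ^ 2 := fun k a ha => csInf_le (hSbd k) ⟨a, ha, rfl⟩
  have hI1 : ∀ k, I k ≤ 1 := by
    intro k
    obtain ⟨a, ha⟩ := hne k
    refine (hIle k a ha).trans ?_
    have := hb a
    have := norm_nonneg (h a)
    nlinarith
  have hIb : BddAbove (Set.range I) := ⟨1, by rintro _ ⟨k, rfl⟩; exact hI1 k⟩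
  have hIlim := tendsto_atTop_ciSup hImono hIb
  have hex : ∀ k : ℕ, ∃ a ∈ C k, ‖h a‖ ^ 2 < I k + 1 / ((k : ℝ) + 1) := by
    intro k
    obtain ⟨_, ⟨a, ha, rfl⟩, hlt⟩ := exists_lt_of_csInf_lt (hSne k)
      (show sInf (S k) < I k + 1 / ((k : ℝ) + 1) from lt_add_of_pos_right _ (by positivity))
    exact ⟨a, ha, hlt⟩
  choose a haC ha using hex
  refine ⟨a, haC, ?_⟩
  refine cauchySeq_of_le_tendsto_0'
    (fun n : ℕ => √(((⨆ k, I k) - I n) + 2 * (1 / ((n : ℝ) + 1)))) ?_ ?_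
  · intro j k hjk
    rw [dist_eq_norm]
    apply Real.le_sqrt_of_sq_le
    obtain ⟨c, hc, hin⟩ := hmid j (a j) (haC j) (a k) (hanti hjk (haC k))
    rw [norm_sub_sq_real, hin]
    have h1 := hIle j c hc
    have h2 := ha j
    have h3 := ha k
    have h4 : I k ≤ ⨆ k, I k := le_ciSup hIb k
    have h5 : 1 / ((k : ℝ) + 1) ≤ 1 / ((j : ℝ) + 1) := by gcongr
    linarith
  · have h1 : Tendsto (fun n : ℕ => ((⨆ k, I k) - I n) + 2 * (1 / ((n : ℝ) + 1))) atTop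
        (𝓝 (((⨆ k, I k) - (⨆ k, I k)) + 2 * 0)) :=
      (tendsto_const_nhds.sub hIlim).add (tendsto_one_div_add_atTop_nhds_zero_nat.const_mul 2)
    have h2 := (Real.continuous_sqrt.tendsto _).comp h1
    simpa [Function.comp_def] using h2

section LpPart
variable {X : Type*} [MeasurableSpace X] (π : Measure X) [IsProbabilityMeasure π]
    (p : ℝ≥0∞) [Fact (1 ≤ p)]

lemma lp_posSMulMono : PosSMulMono ℝ (Lp ℝ p π) := by
  constructor
  intro a ha f g hfg
  change a • f ≤ a • g
  rw [← Lp.coeFn_le] at hfg ⊢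
  filter_upwards [hfg, Lp.coeFn_smul a f, Lp.coeFn_smul a g] with x h1 h2 h3
  rw [h2, h3]
  exact mul_le_mul_of_nonneg_left h1 ha

lemma exp_memLp (u : Lp ℝ p π) : MemLp (fun x => Real.exp (-|u x| / 2)) 2 π := by
  refine MemLp.of_bound (C := 1) ?_ ?_
  · have := (Lp.aestronglyMeasurable u)
    exact Real.continuous_exp.comp_aestronglyMeasurable
      ((continuous_abs.neg.div_const 2).comp_aestronglyMeasurable this)
  · refine Eventually.of_forall fun x => ?_
    rw [Real.norm_of_nonneg (Real.exp_pos _).le, Real.exp_le_one_iff]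
    have := abs_nonneg (u x)
    linarith

noncomputable def expMap (u : Lp ℝ p π) : Lp ℝ 2 π := (exp_memLp π p u).toLp _

lemma expMap_coe (u : Lp ℝ p π) : expMap π p u =ᵐ[π] fun x => Real.exp (-|u x| / 2) :=
  MemLp.coeFn_toLp _

lemma expMap_norm_le (u : Lp ℝ p π) : ‖expMap π p u‖ ≤ 1 := by
  have h := Lp.norm_le_of_ae_bound (f := expMap π p u) (C := 1) zero_le_one (by
    filter_upwards [expMap_coe π p u] with x hx
    rw [hx, Real.norm_of_nonneg (Real.exp_pos _).le, Real.exp_le_one_iff]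
    have := abs_nonneg (u x)
    linarith)
  simpa [measureUnivNNReal] using h

lemma expMap_inner {u w : Lp ℝ p π} (hu : 0 ≤ u) (hw : 0 ≤ w) :
    inner ℝ (expMap π p u) (expMap π p w) = ‖expMap π p ((1/2 : ℝ) • (u + w))‖ ^ 2 := by
  rw [← real_inner_self_eq_norm_sq, L2.inner_def, L2.inner_def]
  rw [← Lp.coeFn_nonneg] at hu hw
  refine integral_congr_ae ?_
  filter_upwards [expMap_coe π p u, expMap_coe π p w, expMap_coe π p ((1/2 : ℝ) • (u + w)),
    Lp.coeFn_smul (1/2 : ℝ) (u + w), Lp.coeFn_add u w, hu, hw] with x h1 h2 h3 h4 h5 h6 h7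
  have h6' : 0 ≤ u x := h6
  have h7' : 0 ≤ w x := h7
  rw [h1, h2, h3, h4, Pi.smul_apply, h5, Pi.add_apply, smul_eq_mul,
    abs_of_nonneg h6', abs_of_nonneg h7', abs_of_nonneg (by positivity)]
  simp only [RCLike.inner_apply, conj_trivial, ← Real.exp_add]
  congr 1
  ring

lemma lp_dominated (hp_top : p ≠ ⊤) (V : ℕ → Lp ℝ p π) (L W : Lp ℝ p π)
    (hV : ∀ k, ∀ᵐ x ∂π, |V k x| ≤ |W x|)
    (hL : ∀ᵐ x ∂π, |L x| ≤ |W x|)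
    (hlim : ∀ᵐ x ∂π, Tendsto (fun k => V k x) atTop (𝓝 (L x))) :
    Tendsto V atTop (𝓝 L) := by
  have hp0 : p ≠ 0 := (lt_of_lt_of_le zero_lt_one (Fact.out : 1 ≤ p)).ne'
  have hpr : 0 < p.toReal := ENNReal.toReal_pos hp0 hp_top
  rw [Lp.tendsto_Lp_iff_tendsto_eLpNorm']
  simp_rw [eLpNorm_eq_lintegral_rpow_enorm_toReal hp0 hp_top]
  have key : Tendsto (fun k => ∫⁻ x, ‖(V k - L : X → ℝ) x‖ₑ ^ p.toReal ∂π) atTop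
      (𝓝 (∫⁻ x, 0 ∂π)) := by
    refine tendsto_lintegral_of_dominated_convergence'
      (fun x => ‖(2 * W x : ℝ)‖ₑ ^ p.toReal) ?_ ?_ ?_ ?_
    · intro k
      exact ((Lp.aestronglyMeasurable (V k)).sub (Lp.aestronglyMeasurable L)).enorm.pow_const _
    · intro k
      filter_upwards [hV k, hL] with x h1 h2
      refine ENNReal.rpow_le_rpow ?_ hpr.le
      rw [enorm_le_iff_norm_le, Pi.sub_apply, Real.norm_eq_abs, Real.norm_eq_abs, abs_mul, abs_two]
      have := abs_sub (V k x) (L x)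
      linarith
    · have := ((Lp.memLp W).const_mul 2).eLpNorm_lt_top
      exact (lintegral_rpow_enorm_lt_top_of_eLpNorm_lt_top hp0 hp_top this).ne
    · filter_upwards [hlim] with x hx
      have h1 : Tendsto (fun k => V k x - L x) atTop (𝓝 0) := by
        simpa using hx.sub_const (L x)
      have h2 := h1.enorm
      have h3 := (ENNReal.continuous_rpow_const (y := p.toReal)).tendsto _ |>.comp h2
      simpa [Function.comp_def, ENNReal.zero_rpow_of_pos hpr] using h3
  have h4 := (ENNReal.continuous_rpow_const (y := 1 / p.toReal)).tendsto _ |>.comp key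
  simpa [Function.comp_def, ENNReal.zero_rpow_of_pos (inv_pos.2 hpr)] using h4

lemma lp_intersection (hp_top : p ≠ ⊤) (C : ℕ → Set (Lp ℝ p π)) (hanti : Antitone C)
    (hne : ∀ k, (C k).Nonempty) (hcl : ∀ k, IsClosed (C k))
    (hmid : ∀ k, ∀ a ∈ C k, ∀ b ∈ C k, (1/2 : ℝ) • (a + b) ∈ C k)
    (hpos : ∀ k, ∀ a ∈ C k, 0 ≤ a) (W : Lp ℝ p π) (ε : ℕ → ℝ) (hε : Tendsto ε atTop (𝓝 0))
    (hdom : ∀ k, ∀ a ∈ C k, ∃ z : Lp ℝ p π, a ≤ W + z ∧ ‖z‖ ≤ ε k) :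
    ∃ u, ∀ k, u ∈ C k := by
  obtain ⟨u, huC, hcau⟩ := hilbert_cauchy (expMap π p) C hanti hne (expMap_norm_le π p)
    (fun k a ha b hb => ⟨_, hmid k a ha b hb, expMap_inner π p (hpos k a ha) (hpos k b hb)⟩)
  obtain ⟨H, hH⟩ := cauchySeq_tendsto_of_complete hcau
  choose! z hz1 hz2 using fun k => hdom k (u k) (huC k)
  have hz : Tendsto z atTop (𝓝 0) := squeeze_zero_norm hz2 hε
  obtain ⟨φ, hφ, hφlim⟩ := (tendstoInMeasure_of_tendsto_Lp hH).exists_seq_tendsto_ae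
  obtain ⟨θ, hθ, hθlim⟩ :=
    (tendstoInMeasure_of_tendsto_Lp (hz.comp hφ.tendsto_atTop)).exists_seq_tendsto_ae
  have hψ : StrictMono (φ ∘ θ) := hφ.comp hθ
  set U : ℕ → Lp ℝ p π := fun k => u (φ (θ k)) with hU
  set Z : ℕ → Lp ℝ p π := fun k => z (φ (θ k)) with hZ
  have hUC : ∀ k, U k ∈ C (φ (θ k)) := fun k => huC _
  have hZlim : Tendsto Z atTop (𝓝 0) := hz.comp hψ.tendsto_atTop
  have hU0 : ∀ k, 0 ≤ U k := fun k => hpos _ _ (hUC k)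
  have hUW : ∀ k, U k ≤ W + Z k := fun k => hz1 _
  have hae : ∀ᵐ x ∂π, (∀ k, 0 ≤ U k x) ∧ (∀ k, U k x ≤ W x + Z k x) ∧
      Tendsto (fun k => Z k x) atTop (𝓝 0) ∧
      Tendsto (fun k => Real.exp (-|U k x| / 2)) atTop (𝓝 (H x)) := by
    have a1 : ∀ᵐ x ∂π, ∀ k, 0 ≤ U k x := ae_all_iff.2 fun k => (Lp.coeFn_nonneg _).2 (hU0 k)
    have a2 : ∀ᵐ x ∂π, ∀ k, U k x ≤ W x + Z k x := ae_all_iff.2 fun k => by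
      filter_upwards [(Lp.coeFn_le _ _).2 (hUW k), Lp.coeFn_add W (Z k)] with x h1 h2
      rw [h2] at h1
      exact h1
    have a3 : ∀ᵐ x ∂π, ∀ k, expMap π p (U k) x = Real.exp (-|U k x| / 2) :=
      ae_all_iff.2 fun k => expMap_coe π p (U k)
    filter_upwards [a1, a2, a3, hφlim, hθlim, Lp.coeFn_zero ℝ p π] with x h1 h2 h3 h4 h5 h6
    refine ⟨h1, h2, ?_, ?_⟩
    · rw [h6] at h5
      exact h5
    · have := h4.comp hθ.tendsto_atTop
      refine this.congr fun k => ?_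
      exact h3 k
  let L0 : X → ℝ := fun x => -2 * Real.log (H x)
  have hae2 : ∀ᵐ x ∂π, Tendsto (fun k => U k x) atTop (𝓝 (L0 x)) ∧ 0 ≤ L0 x ∧ L0 x ≤ W x := by
    filter_upwards [hae] with x ⟨h1, h2, h3, h4⟩
    have hlow : Real.exp (-W x / 2) ≤ H x := by
      have h5 : Tendsto (fun k => Real.exp (-(W x + Z k x) / 2)) atTop
          (𝓝 (Real.exp (-(W x + 0) / 2))) :=
        (Real.continuous_exp.tendsto _).comp (((h3.const_add (W x)).neg).div_const 2)
      rw [add_zero] at h5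
      refine le_of_tendsto_of_tendsto' h5 h4 fun k => ?_
      rw [abs_of_nonneg (h1 k), Real.exp_le_exp]
      linarith [h2 k]
    have hHpos : 0 < H x := (Real.exp_pos _).trans_le hlow
    have h6 : Tendsto (fun k => U k x) atTop (𝓝 (L0 x)) := by
      have h7 := ((Real.continuousAt_log hHpos.ne').tendsto.comp h4).const_mul (-2)
      refine h7.congr fun k => ?_
      simp only [Function.comp, Real.log_exp, abs_of_nonneg (h1 k)]
      ring
    refine ⟨h6, ge_of_tendsto' h6 h1, ?_⟩
    have h8 : Tendsto (fun k => W x + Z k x) atTop (𝓝 (W x + 0)) := h3.const_add (W x)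
    rw [add_zero] at h8
    exact le_of_tendsto_of_tendsto' h6 h8 h2
  have hL0m : AEStronglyMeasurable L0 π :=
    ((Real.measurable_log.comp_aemeasurable
      (Lp.aestronglyMeasurable H).aemeasurable).const_mul (-2)).aestronglyMeasurable
  have hL0 : MemLp L0 p π := by
    refine (Lp.memLp W).mono hL0m ?_
    filter_upwards [hae2] with x ⟨_, h1, h2⟩
    rw [Real.norm_of_nonneg h1, Real.norm_of_nonneg (h1.trans h2)]
    exact h2
  let L : Lp ℝ p π := hL0.toLp L0
  have hLc : L =ᵐ[π] L0 := hL0.coeFn_toLp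
  have hVlim : Tendsto (fun k => U k ⊓ W) atTop (𝓝 L) := by
    refine lp_dominated π p hp_top _ L W ?_ ?_ ?_
    · intro k
      filter_upwards [hae, hae2, Lp.coeFn_inf (U k) W] with x ⟨h1, _⟩ ⟨_, h2, h3⟩ h4
      rw [h4, Pi.inf_apply, abs_of_nonneg (le_inf (h1 k) (h2.trans h3)),
        abs_of_nonneg (h2.trans h3)]
      exact inf_le_right
    · filter_upwards [hae2, hLc] with x ⟨_, h2, h3⟩ h4
      rw [h4, abs_of_nonneg h2, abs_of_nonneg (h2.trans h3)]
      exact h3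
    · have a1 : ∀ᵐ x ∂π, ∀ k, (U k ⊓ W : Lp ℝ p π) x = U k x ⊓ W x :=
        ae_all_iff.2 fun k => Lp.coeFn_inf (U k) W
      filter_upwards [a1, hae2, hLc] with x h1 ⟨h2, _, h3⟩ h4
      rw [h4]
      have h5 : Tendsto (fun k => U k x ⊓ W x) atTop (𝓝 (L0 x ⊓ W x)) :=
        h2.inf_nhds tendsto_const_nhds
      rw [inf_eq_left.2 h3] at h5
      exact h5.congr fun k => (h1 k).symm
  have hdiff : Tendsto (fun k => U k - U k ⊓ W) atTop (𝓝 0) := by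
    refine squeeze_zero_norm (a := fun k => ‖Z k‖) (fun k => ?_) (by simpa using hZlim.norm)
    refine norm_le_norm_of_abs_le_abs ?_
    rw [abs_of_nonneg (sub_nonneg.2 inf_le_left), sub_le_iff_le_add, ← sub_le_iff_le_add']
    refine le_inf ?_ ?_
    · exact sub_le_self _ (abs_nonneg _)
    · rw [sub_le_iff_le_add]
      exact (hUW k).trans (by gcongr; exact le_abs_self _)
  have hUlim : Tendsto U atTop (𝓝 L) := by
    have := hdiff.add hVlim
    simpa using this
  refine ⟨L, fun j => (hcl j).mem_of_tendsto hUlim ?_⟩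
  filter_upwards [eventually_ge_atTop j] with k hk
  exact hanti (hk.trans (hψ.le_apply (x := k))) (hUC k)

end LpPart

section EigenPart
variable {X : Type*} [MeasurableSpace X] (π : Measure X) [IsProbabilityMeasure π]
    (p : ℝ≥0∞) [Fact (1 ≤ p)]

lemma iterate_ineq {E : Type*} [NormedAddCommGroup E] [NormedSpace ℝ E] [Lattice E]
    [HasSolidNorm E] [IsOrderedAddMonoid E] [PosSMulMono ℝ E] [OrderClosedTopology E]
    {K : E →L[ℝ] E} (hK : ∀ f, 0 ≤ f → 0 ≤ K f) {l : ℝ} (hl : 0 < l) {f : E} (hf : 0 ≤ f)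
    (i : ℕ) : ∃ g : E, 0 ≤ g ∧ ∀ (w : E) (a : ℝ), l • w ≤ K w + a • f →
      l ^ i • w ≤ (K ^ i) w + a • g := by
  induction i with
  | zero => exact ⟨0, le_rfl, fun w a _ => by simp⟩
  | succ i ih =>
    obtain ⟨g, hg0, hg⟩ := ih
    refine ⟨(K ^ i) f + l • g, add_nonneg (op_pow_nonneg hK i f hf) (smul_nonneg hl.le hg0), ?_⟩
    intro w a hw
    calc l ^ (i+1) • w = l • l ^ i • w := by rw [smul_smul, pow_succ']
      _ ≤ l • ((K ^ i) w + a • g) := smul_le_smul_of_nonneg_left (hg w a hw) hl.le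
      _ = (K ^ i) (l • w) + a • l • g := by rw [smul_add, map_smul, smul_comm l a]
      _ ≤ (K ^ i) (K w + a • f) + a • l • g := by
          gcongr
          exact op_mono (op_pow_nonneg hK i) hw
      _ = (K ^ (i+1)) w + a • ((K ^ i) f + l • g) := by
          rw [map_add, map_smul, smul_add, pow_succ, add_assoc]
          rfl

lemma eigen_exists (hp_top : p ≠ ⊤) (T : ℕ → Lp ℝ p π →L[ℝ] Lp ℝ p π)
    (K : Lp ℝ p π →L[ℝ] Lp ℝ p π)
    (hpos : ∀ n f, 0 ≤ f → 0 ≤ T n f) (hmono : ∀ m n, m ≤ n → ∀ f, 0 ≤ f → T m f ≤ T n f)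
    (hle : ∀ n f, 0 ≤ f → T n f ≤ K f)
    (hconv : ∀ f, 0 ≤ f → Tendsto (fun n => T n f) atTop (𝓝 (K f)))
    {l : ℝ} (hl0 : 0 < l) {f : Lp ℝ p π} (hf : 0 ≤ f) (i : ℕ)
    (hcomp : IsCompactOperator ⇑(K ^ i))
    (hall : ∀ k : ℕ, ∃ w : Lp ℝ p π, 0 ≤ w ∧ ‖w‖ = 1 ∧ T k w ≤ l • w ∧
      l • w ≤ K w + ((k : ℝ) + 1)⁻¹ • f) :
    ∃ u : Lp ℝ p π, u ≠ 0 ∧ (K ^ i) u = l ^ i • u := by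
  have := lp_posSMulMono π p
  have hKpos : ∀ f, 0 ≤ f → 0 ≤ K f := fun f hf => (hpos 0 f hf).trans (hle 0 f hf)
  obtain ⟨g, hg0, hg⟩ := iterate_ineq hKpos hl0 hf i
  choose w hw0 hw1 hwT hwK using hall
  set A : Lp ℝ p π →L[ℝ] Lp ℝ p π := K ^ i with hA
  have hwA : ∀ k, l ^ i • w k ≤ A (w k) + ((k : ℝ) + 1)⁻¹ • g := fun k => hg _ _ (hwK k)
  obtain ⟨Q, hQ, hQs⟩ := IsCompactOperator.image_closedBall_subset_compact (𝕜₁ := ℝ)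
    (f := (A : Lp ℝ p π →ₗ[ℝ] Lp ℝ p π)) hcomp 1
  obtain ⟨v, -, φ, hφ, hlim⟩ := hQ.tendsto_subseq (x := fun n => A (w n))
    (fun n => hQs ⟨w n, by simp [hw1 n], rfl⟩)
  have hinv : Tendsto (fun k : ℕ => ((k : ℝ) + 1)⁻¹) atTop (𝓝 0) := by
    simpa using tendsto_one_div_add_atTop_nhds_zero_nat (𝕜 := ℝ)
  have hli : 0 < l ^ i := by positivity
  have hv : l ^ i ≤ ‖v‖ := by
    have h1 : Tendsto (fun n => ‖A (w (φ n)) + (((φ n : ℕ) : ℝ) + 1)⁻¹ • g‖) atTop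
        (𝓝 ‖v + (0 : ℝ) • g‖) :=
      (hlim.add ((hinv.comp hφ.tendsto_atTop).smul_const g)).norm
    rw [zero_smul, add_zero] at h1
    refine ge_of_tendsto' h1 fun n => ?_
    have h2 := norm_le_of_nonneg_le (smul_nonneg hli.le (hw0 (φ n))) (hwA (φ n))
    rwa [norm_smul, hw1, mul_one, Real.norm_of_nonneg hli.le] at h2
  let C : ℕ → Set (Lp ℝ p π) := fun k => {u | 0 ≤ u ∧ T k u ≤ l • u ∧
    l ^ i • u ≤ A u + ((k : ℝ) + 1)⁻¹ • g ∧ ‖A u - v‖ ≤ ((k : ℝ) + 1)⁻¹}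
  have hsm : ∀ {j k : ℕ}, j ≤ k → ((k : ℝ) + 1)⁻¹ • g ≤ ((j : ℝ) + 1)⁻¹ • g := by
    intro j k hjk
    have h1 : (0 : ℝ) ≤ ((j : ℝ) + 1)⁻¹ - ((k : ℝ) + 1)⁻¹ := by
      rw [sub_nonneg]; gcongr
    have h2 := smul_nonneg h1 hg0
    rwa [sub_smul, sub_nonneg] at h2
  have hinvanti : ∀ {j k : ℕ}, j ≤ k → ((k : ℝ) + 1)⁻¹ ≤ ((j : ℝ) + 1)⁻¹ := by
    intro j k hjk
    gcongr
  obtain ⟨u, hu⟩ := lp_intersection π p hp_top C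
    (by
      rintro j k hjk u ⟨h1, h2, h3, h4⟩
      exact ⟨h1, (hmono j k hjk u h1).trans h2, h3.trans (by gcongr),
        h4.trans (hinvanti hjk)⟩)
    (by
      intro k
      have h1 := (tendsto_iff_norm_sub_tendsto_zero.1 hlim).eventually_le_const
        (show (0 : ℝ) < ((k : ℝ) + 1)⁻¹ by positivity)
      obtain ⟨n, hn1, hn2⟩ := (h1.and (eventually_ge_atTop k)).exists
      have hk : k ≤ φ n := hn2.trans hφ.le_apply
      exact ⟨w (φ n), hw0 _, (hmono k _ hk _ (hw0 _)).trans (hwT _),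
        (hwA _).trans (by gcongr), hn1⟩)
    (by
      intro k
      have c1 : IsClosed {u : Lp ℝ p π | 0 ≤ u} := isClosed_Ici
      have c2 : IsClosed {u : Lp ℝ p π | T k u ≤ l • u} :=
        isClosed_le (T k).continuous (continuous_const_smul l)
      have c3 : IsClosed {u : Lp ℝ p π | l ^ i • u ≤ A u + ((k : ℝ) + 1)⁻¹ • g} :=
        isClosed_le (continuous_const_smul _) (A.continuous.add continuous_const)
      have c4 : IsClosed {u : Lp ℝ p π | ‖A u - v‖ ≤ ((k : ℝ) + 1)⁻¹} :=
        isClosed_le (A.continuous.sub continuous_const).norm continuous_const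
      exact c1.inter (c2.inter (c3.inter c4)))
    (by
      rintro k a ⟨a1, a2, a3, a4⟩ b ⟨b1, b2, b3, b4⟩
      have hh : (0 : ℝ) ≤ 1/2 := by norm_num
      refine ⟨smul_nonneg hh (add_nonneg a1 b1), ?_, ?_, ?_⟩
      · have := smul_le_smul_of_nonneg_left (add_le_add a2 b2) hh
        rwa [← map_add, ← map_smul, ← smul_add, smul_comm] at this
      · have := smul_le_smul_of_nonneg_left (add_le_add a3 b3) hh
        rw [← smul_add, smul_comm] at this
        refine this.trans_eq ?_
        rw [map_smul, map_add]
        module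
      · have h1 : A ((1/2 : ℝ) • (a + b)) - v = (1/2 : ℝ) • ((A a - v) + (A b - v)) := by
          rw [map_smul, map_add]; module
        rw [h1, norm_smul, Real.norm_of_nonneg hh]
        have := norm_add_le (A a - v) (A b - v)
        linarith)
    (fun k a ha => ha.1) ((l ^ i)⁻¹ • v)
    (fun k => (l ^ i)⁻¹ * (((k : ℝ) + 1)⁻¹ * (1 + ‖g‖)))
    (by
      have := (hinv.mul_const (1 + ‖g‖)).const_mul (l ^ i)⁻¹
      simpa using this)
    (by
      rintro k a ⟨a1, a2, a3, a4⟩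
      refine ⟨(l ^ i)⁻¹ • ((A a - v) + ((k : ℝ) + 1)⁻¹ • g), ?_, ?_⟩
      · have := smul_le_smul_of_nonneg_left a3 (inv_nonneg.2 hli.le)
        rw [smul_smul, inv_mul_cancel₀ hli.ne', one_smul] at this
        refine this.trans_eq ?_
        module
      · rw [norm_smul, Real.norm_of_nonneg (inv_nonneg.2 hli.le)]
        refine mul_le_mul_of_nonneg_left ?_ (inv_nonneg.2 hli.le)
        refine (norm_add_le _ _).trans ?_
        rw [norm_smul, Real.norm_of_nonneg (by positivity)]
        linarith)
  have hu0 : 0 ≤ u := (hu 0).1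
  have hKu : K u ≤ l • u := le_of_tendsto' (hconv u hu0) fun k => (hu k).2.1
  have hAu1 : l ^ i • u ≤ A u := by
    have h1 : Tendsto (fun k : ℕ => A u + ((k : ℝ) + 1)⁻¹ • g) atTop (𝓝 (A u + (0 : ℝ) • g)) :=
      (hinv.smul_const g).const_add _
    rw [zero_smul, add_zero] at h1
    exact ge_of_tendsto' h1 fun k => (hu k).2.2.1
  have hAv : A u = v := by
    have := ge_of_tendsto' hinv fun k => (hu k).2.2.2
    exact sub_eq_zero.1 (norm_le_zero_iff.1 this)
  have hpow : ∀ j : ℕ, (K ^ j) u ≤ l ^ j • u := by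
    intro j
    induction j with
    | zero => simp
    | succ j ih =>
      rw [pow_succ']
      calc K ((K ^ j) u) ≤ K (l ^ j • u) := op_mono hKpos ih
        _ = l ^ j • K u := by rw [map_smul]
        _ ≤ l ^ j • l • u := smul_le_smul_of_nonneg_left hKu (by positivity)
        _ = l ^ (j+1) • u := by rw [smul_smul, pow_succ]
  refine ⟨u, ?_, le_antisymm (hpow i) hAu1⟩
  rintro rfl
  rw [map_zero] at hAv
  rw [← hAv, norm_zero] at hv
  linarith

end EigenPart

/-- **Monotone spectral continuity.**  Let `(X, F, π)` be a probability space,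
`p ∈ [1, ∞)`, and `(T_n)`, `T` bounded linear operators on `L_p(X,π)` with
`0 ≤ T_n ≤ T_{n+1} ≤ T` for all `n` (pointwise π-a.e. on nonnegative
functions).  If `‖T_n f − T f‖_p → 0` for every `f` in the positive cone and
`T^i` is compact for some `i ∈ ℕ`, then `ρ(T_n)` increases monotonically to
`ρ(T)`. -/
theorem monotone_specRad_convergence
    {X : Type*} [MeasurableSpace X] (π : Measure X) [IsProbabilityMeasure π]
    (p : ℝ≥0∞) [Fact (1 ≤ p)] (hp_top : p ≠ ⊤)
    (T : ℕ → (Lp ℝ p π →L[ℝ] Lp ℝ p π)) (Tlim : Lp ℝ p π →L[ℝ] Lp ℝ p π)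
    (h_order : ∀ f : Lp ℝ p π, (∀ᵐ x ∂π, 0 ≤ f x) → ∀ n : ℕ,
      (∀ᵐ x ∂π, 0 ≤ (T n f : X → ℝ) x) ∧
      (∀ᵐ x ∂π, (T n f : X → ℝ) x ≤ (T (n + 1) f : X → ℝ) x) ∧
      (∀ᵐ x ∂π, (T n f : X → ℝ) x ≤ (Tlim f : X → ℝ) x))
    (h_conv : ∀ f : Lp ℝ p π, (∀ᵐ x ∂π, 0 ≤ f x) →
      Tendsto (fun n => T n f) atTop (𝓝 (Tlim f)))
    (h_evcompact : ∃ i : ℕ, 0 < i ∧ IsCompactOperator ⇑(Tlim ^ i)) :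
    Monotone (fun n => specRad (T n)) ∧
      Tendsto (fun n => specRad (T n)) atTop (𝓝 (specRad Tlim)) := by
  have := lp_posSMulMono π p
  have hpos : ∀ n f, 0 ≤ f → 0 ≤ T n f := fun n f hf =>
    (Lp.coeFn_nonneg _).1 (h_order f ((Lp.coeFn_nonneg f).2 hf) n).1
  have hstep : ∀ f, 0 ≤ f → ∀ n, T n f ≤ T (n + 1) f := fun f hf n =>
    (Lp.coeFn_le _ _).1 (h_order f ((Lp.coeFn_nonneg f).2 hf) n).2.1
  have hmono : ∀ m n, m ≤ n → ∀ f, 0 ≤ f → T m f ≤ T n f := fun m n hmn f hf =>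
    monotone_nat_of_le_succ (hstep f hf) hmn
  have hle : ∀ n f, 0 ≤ f → T n f ≤ Tlim f := fun n f hf =>
    (Lp.coeFn_le _ _).1 (h_order f ((Lp.coeFn_nonneg f).2 hf) n).2.2
  have hconv : ∀ f, 0 ≤ f → Tendsto (fun n => T n f) atTop (𝓝 (Tlim f)) := fun f hf =>
    h_conv f ((Lp.coeFn_nonneg f).2 hf)
  obtain ⟨i, hi, hcomp⟩ := h_evcompact
  have hM : Monotone (fun n => specRad (T n)) := fun m n hmn =>
    specRad_mono (hpos m) (hmono m n hmn)
  refine ⟨hM, ?_⟩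
  have hbd : BddAbove (Set.range fun n => specRad (T n)) :=
    ⟨specRad Tlim, by rintro _ ⟨n, rfl⟩; exact specRad_mono (hpos n) (hle n)⟩
  have hlim := tendsto_atTop_ciSup hM hbd
  set s := ⨆ n, specRad (T n) with hs
  have hsle : s ≤ specRad Tlim := ciSup_le fun n => specRad_mono (hpos n) (hle n)
  suffices hsr : s = specRad Tlim by rw [← hsr]; exact hlim
  by_contra hne
  have hlt : s < specRad Tlim := lt_of_le_of_ne hsle hne
  have hsn : ∀ n, specRad (T n) ≤ s := fun n => le_ciSup hbd n
  have hs0 : 0 ≤ s := (specRad_nonneg (T 0)).trans (hsn 0)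
  -- every `l` strictly between `s` and `specRad Tlim` yields an eigenvalue
  have heig : ∀ l, s < l → l < specRad Tlim →
      ∃ u : Lp ℝ p π, u ≠ 0 ∧ (Tlim ^ i) u = l ^ i • u := by
    intro l hl1 hl2
    have hl0 : 0 < l := hs0.trans_lt hl1
    by_contra hno
    refine absurd (specRad_le_of_orbits Tlim hl0 fun f hf => ?_) (not_le.2 hl2)
    refine dichotomy T Tlim hpos hmono hle hconv hl0 (fun n => (hsn n).trans_lt hl1) hf ?_
    intro hall
    exact hno (eigen_exists π p hp_top T Tlim hpos hmono hle hconv hl0 hf i hcomp hall)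
  set d := specRad Tlim - s with hd
  have hd0 : 0 < d := sub_pos.2 hlt
  let l : ℕ → ℝ := fun n => specRad Tlim - d / ((n : ℝ) + 2)
  have hlmid : ∀ n, s + d / 2 ≤ l n := fun n => by
    have : d / ((n : ℝ) + 2) ≤ d / 2 := by
      gcongr
      have : (0 : ℝ) ≤ n := n.cast_nonneg
      linarith
    simp only [l]; linarith
  have hl1 : ∀ n, s < l n := fun n => lt_of_lt_of_le (by linarith) (hlmid n)
  have hl2 : ∀ n, l n < specRad Tlim := fun n => by
    have : 0 < d / ((n : ℝ) + 2) := by positivity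
    simp only [l]; linarith
  have hlinj : Function.Injective l := by
    intro a b hab
    have hab : d / ((a : ℝ) + 2) = d / ((b : ℝ) + 2) := by
      simp only [l] at hab; linarith
    rw [div_eq_div_iff (by positivity) (by positivity)] at hab
    have := mul_left_cancel₀ hd0.ne' hab
    have h2 : (a : ℝ) = b := by linarith
    exact_mod_cast h2
  choose u hu hAu using fun n => heig (l n) (hl1 n) (hl2 n)
  refine no_inf_eig (Tlim ^ i) hcomp ((s + d / 2) ^ i) (by positivity) (fun n => l n ^ i) ?_ ?_ u hu hAu
  · intro a b hab
    exact hlinj ((pow_left_inj₀ (hs0.trans (hl1 a).le) (hs0.trans (hl1 b).le) hi.ne').1 hab)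
  · intro n
    exact pow_le_pow_left₀ (by positivity) (hlmid n) i
end
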